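/- arXiv:math/0003148 — 7 statements merged into one kernel-verified Lean document; each statement's English description precedes it below -/
import Mathlib

section
/- For every natural number n, every triple (m, n1, n2) ∈ ℕ³ with 3m − 2n1 − n2 = n and b(m, n1, n2) ≠ 0 satisfies n1 + n2 ≤ m ≤ n; in particular, the set {(m, n1, n2) ∈ ℕ³ : 3m − 2n1 − n2 = n and b(m, n1, n2) ≠ 0} is finite. -/
open scoped BigOperators

/-!
The recurrence expresses a multiple of `b` at an index `p` through the values of `b` at `p - s`,
where `s` runs over nine steps that all raise the first coordinate. Descending along nonzero values
must therefore stop, and it can only stop at the origin, so the support of `b` lies in the additive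
monoid generated by the steps. Each step `(i, j₁, j₂)` satisfies `j₁ + j₂ ≤ i`, hence so does every
index `(m, n₁, n₂)` in the support: `n₁ + n₂ ≤ m`. On the level set `3m - 2n₁ - n₂ = n` this gives
`n = m + 2(m - n₁ - n₂) + n₂ ≥ m`.
-/

theorem mem_closure_of_ne_zero_of_steps {G M : Type*} [AddGroup G] [Zero M] {b : G → M}
    {S : Set G} (height : G →+ ℤ) (hS_pos : ∀ s ∈ S, 0 < height s)
    (hb_nonneg : ∀ p, b p ≠ 0 → 0 ≤ height p)
    (hb_step : ∀ p, b p ≠ 0 → p = 0 ∨ ∃ s ∈ S, b (p - s) ≠ 0)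
    {p : G} (hp : b p ≠ 0) : p ∈ AddSubmonoid.closure S := by
  induction hk : (height p).toNat using Nat.strong_induction_on generalizing p with
  | _ k ih =>
    obtain rfl | ⟨s, hs, hps⟩ := hb_step p hp
    · exact zero_mem _
    · have hlt : (height (p - s)).toNat < k := by
        have hs_pos := hS_pos s hs
        have hps_nonneg := hb_nonneg (p - s) hps
        rw [map_sub] at hps_nonneg ⊢
        omega
      simpa only [sub_add_cancel] using
        add_mem (ih _ hlt hps rfl) (AddSubmonoid.subset_closure hs)

/-- The steps of the recurrence: the differences between the index `(m, n₁, n₂)` on its left-hand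
side and the indices on its right-hand side. -/
def buhringSteps : Finset (ℤ × ℤ × ℤ) :=
  {(1, 0, 0), (1, 1, 0), (1, 0, 1), (2, 1, 0), (2, 0, 1), (2, 0, 0), (3, 1, 0), (3, 0, 1),
    (3, 0, 0)}

theorem fst_pos_of_mem_buhringSteps : ∀ s ∈ buhringSteps, 0 < s.1 := by
  decide

theorem add_le_fst_of_mem_closure_buhringSteps {p : ℤ × ℤ × ℤ}
    (hp : p ∈ AddSubmonoid.closure (buhringSteps : Set (ℤ × ℤ × ℤ))) :
    p.2.1 + p.2.2 ≤ p.1 := by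
  have hsteps : ∀ s ∈ buhringSteps, s.2.1 + s.2.2 ≤ s.1 := by decide
  induction hp using AddSubmonoid.closure_induction with
  | mem s hs => exact hsteps s hs
  | zero => exact le_rfl
  | add p q _ _ hp hq =>
    simp only [Prod.fst_add, Prod.snd_add]
    linarith

theorem exists_buhringStep_of_ne_zero {R : Type*} [Ring R] [NoZeroDivisors R]
    {b : ℤ → ℤ → ℤ → R} {m n₁ n₂ : ℤ} {c a₁ a₂ a₃ a₄ a₅ a₆ a₇ a₈ a₉ : R} (hc : c ≠ 0)
    (hrec : c * b m n₁ n₂ =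
      a₁ * b (m - 1) n₁ n₂ + a₂ * b (m - 1) (n₁ - 1) n₂ + a₃ * b (m - 1) n₁ (n₂ - 1)
      - a₄ * b (m - 2) (n₁ - 1) n₂ - a₅ * b (m - 2) n₁ (n₂ - 1) - a₆ * b (m - 2) n₁ n₂
      - a₇ * b (m - 3) (n₁ - 1) n₂ - a₈ * b (m - 3) n₁ (n₂ - 1) - a₉ * b (m - 3) n₁ n₂)
    (hb : b m n₁ n₂ ≠ 0) :
    ∃ s ∈ buhringSteps, b (m - s.1) (n₁ - s.2.1) (n₂ - s.2.2) ≠ 0 := by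
  by_contra! hzero
  simp only [buhringSteps, Finset.forall_mem_insert, Finset.mem_singleton, forall_eq,
    sub_zero] at hzero
  apply mul_ne_zero hc hb
  simp only [hrec, hzero, mul_zero, add_zero, sub_zero]

theorem finite_setOf_buhring_degree_eq (n : ℕ) :
    {p : ℕ × ℕ × ℕ | 3 * (p.1 : ℤ) - 2 * (p.2.1 : ℤ) - (p.2.2 : ℤ) = (n : ℤ) ∧
      p.2.1 + p.2.2 ≤ p.1}.Finite := by
  refine (Set.finite_Iic (n, n, n)).subset ?_
  rintro ⟨m, n₁, n₂⟩ ⟨hdeg, hle⟩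
  simp only [Set.mem_Iic, Prod.mk_le_mk] at hdeg hle ⊢
  omega

theorem buhring_b_support_finite_general {R : Type*} [Ring R] [NoZeroDivisors R]
    {b c a₁ a₂ a₃ a₄ a₅ a₆ a₇ a₈ a₉ : ℤ → ℤ → ℤ → R}
    (hc : ∀ m n₁ n₂ : ℤ, 3 * m - 2 * n₁ - n₂ ≠ 0 → c m n₁ n₂ ≠ 0)
    (hb_neg : ∀ m n₁ n₂ : ℤ, (m < 0 ∨ n₁ < 0 ∨ n₂ < 0) → b m n₁ n₂ = 0)
    (hb_zero : ∀ m n₁ n₂ : ℤ, 3 * m - 2 * n₁ - n₂ = 0 → (m, n₁, n₂) ≠ (0, 0, 0) →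
      b m n₁ n₂ = 0)
    (hb_rec : ∀ m n₁ n₂ : ℤ, 0 ≤ m → 0 ≤ n₁ → 0 ≤ n₂ → 3 * m - 2 * n₁ - n₂ ≠ 0 →
      c m n₁ n₂ * b m n₁ n₂ =
        a₁ m n₁ n₂ * b (m - 1) n₁ n₂ + a₂ m n₁ n₂ * b (m - 1) (n₁ - 1) n₂
        + a₃ m n₁ n₂ * b (m - 1) n₁ (n₂ - 1) - a₄ m n₁ n₂ * b (m - 2) (n₁ - 1) n₂
        - a₅ m n₁ n₂ * b (m - 2) n₁ (n₂ - 1) - a₆ m n₁ n₂ * b (m - 2) n₁ n₂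
        - a₇ m n₁ n₂ * b (m - 3) (n₁ - 1) n₂ - a₈ m n₁ n₂ * b (m - 3) n₁ (n₂ - 1)
        - a₉ m n₁ n₂ * b (m - 3) n₁ n₂)
    (n : ℕ) :
    (∀ m n₁ n₂ : ℕ, 3 * (m : ℤ) - 2 * (n₁ : ℤ) - (n₂ : ℤ) = (n : ℤ) →
      b (m : ℤ) (n₁ : ℤ) (n₂ : ℤ) ≠ 0 → n₁ + n₂ ≤ m ∧ m ≤ n) ∧
    Set.Finite {p : ℕ × ℕ × ℕ |
      3 * (p.1 : ℤ) - 2 * (p.2.1 : ℤ) - (p.2.2 : ℤ) = (n : ℤ) ∧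
      b (p.1 : ℤ) (p.2.1 : ℤ) (p.2.2 : ℤ) ≠ 0} := by
  have hb_nonneg (m n₁ n₂ : ℤ) (hb : b m n₁ n₂ ≠ 0) : 0 ≤ m ∧ 0 ≤ n₁ ∧ 0 ≤ n₂ := by
    simpa only [not_or, not_lt] using mt (hb_neg m n₁ n₂) hb
  have hb_step (p : ℤ × ℤ × ℤ) (hb : b p.1 p.2.1 p.2.2 ≠ 0) :
      p = 0 ∨ ∃ s ∈ buhringSteps, b (p - s).1 (p - s).2.1 (p - s).2.2 ≠ 0 := by
    obtain ⟨hm, hn₁, hn₂⟩ := hb_nonneg _ _ _ hb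
    by_cases hdeg : 3 * p.1 - 2 * p.2.1 - p.2.2 = 0
    · exact .inl (by_contra fun hp ↦ hb (hb_zero _ _ _ hdeg hp))
    · exact .inr (exists_buhringStep_of_ne_zero (hc _ _ _ hdeg)
        (hb_rec _ _ _ hm hn₁ hn₂ hdeg) hb)
  have hle (m n₁ n₂ : ℕ) (hb : b m n₁ n₂ ≠ 0) : n₁ + n₂ ≤ m := by
    have hmem := mem_closure_of_ne_zero_of_steps (b := fun p ↦ b p.1 p.2.1 p.2.2)
      (p := ((m : ℤ), (n₁ : ℤ), (n₂ : ℤ))) (AddMonoidHom.fst ℤ (ℤ × ℤ))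
      fst_pos_of_mem_buhringSteps (fun p hp ↦ (hb_nonneg _ _ _ hp).1) hb_step hb
    have hle_int : (n₁ : ℤ) + n₂ ≤ m := add_le_fst_of_mem_closure_buhringSteps hmem
    exact_mod_cast hle_int
  refine ⟨fun m n₁ n₂ hdeg hb ↦ ?_, (finite_setOf_buhring_degree_eq n).subset
    fun p hp ↦ ⟨hp.1, hle _ _ _ hp.2⟩⟩
  have hle_m := hle m n₁ n₂ hb
  exact ⟨hle_m, by omega⟩

theorem buhring_b_support_finite
    (kap s0 t10 t20 tau L B1 B2 D1 D2 D3 D4 D5 D6 : ℝ)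
    (hkap : kap = 1 ∨ kap = -1) (hs0 : s0 ≠ 0)
    (b : ℤ → ℤ → ℤ → ℝ)
    (hb_neg : ∀ m n1 n2 : ℤ, (m < 0 ∨ n1 < 0 ∨ n2 < 0) → b m n1 n2 = 0)
    (hb_one : b 0 0 0 = 1)
    (hb_zero : ∀ m n1 n2 : ℤ, 3 * m - 2 * n1 - n2 = 0 → (m, n1, n2) ≠ (0, 0, 0) →
      b m n1 n2 = 0)
    (hb_rec : ∀ m n1 n2 : ℤ, 0 ≤ m → 0 ≤ n1 → 0 ≤ n2 → 3 * m - 2 * n1 - n2 ≠ 0 →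
      6 * kap * s0 * ((3 * m - 2 * n1 - n2 : ℤ) : ℝ) * b m n1 n2 =
        ((((3 * m - 2 * n1 - n2 : ℤ) : ℝ) + tau - 3) ^ 2 - L ^ 2) * b (m - 1) n1 n2
        + (-4 * kap * t10 * (((3 * m - 2 * n1 - n2 : ℤ) : ℝ) + tau - 2) + t20 ^ 2 - B2) *
            b (m - 1) (n1 - 1) n2
        + (-2 * kap * t20 * (((3 * m - 2 * n1 - n2 : ℤ) : ℝ) + tau - 5 / 2) - B1) *
            b (m - 1) n1 (n2 - 1)
        - D1 * b (m - 2) (n1 - 1) n2 - D2 * b (m - 2) n1 (n2 - 1) - D3 * b (m - 2) n1 n2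
        - D4 * b (m - 3) (n1 - 1) n2 - D5 * b (m - 3) n1 (n2 - 1) - D6 * b (m - 3) n1 n2) :
    ∀ n : ℕ,
      (∀ m n1 n2 : ℕ, 3 * (m : ℤ) - 2 * (n1 : ℤ) - (n2 : ℤ) = (n : ℤ) →
        b (m : ℤ) (n1 : ℤ) (n2 : ℤ) ≠ 0 → n1 + n2 ≤ m ∧ m ≤ n) ∧
      Set.Finite {p : ℕ × ℕ × ℕ |
        3 * (p.1 : ℤ) - 2 * (p.2.1 : ℤ) - (p.2.2 : ℤ) = (n : ℤ) ∧
        b (p.1 : ℤ) (p.2.1 : ℤ) (p.2.2 : ℤ) ≠ 0} := by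
  have hkap0 : kap ≠ 0 := by rcases hkap with rfl | rfl <;> norm_num
  exact buhring_b_support_finite_general (fun m n1 n2 hdeg ↦ mul_ne_zero (by positivity)
    (Int.cast_ne_zero.mpr hdeg)) hb_neg hb_zero hb_rec
end

section
/- For every natural number n, a(n) equals the sum of b(m, n1, n2) over all triples (m, n1, n2) ∈ ℕ³ with 3m − 2n1 − n2 = n (a finite sum, since b(m, n1, n2) = 0 unless n1 + n2 ≤ m ≤ n). -/
open scoped BigOperators

/-!
Grade `ℤ³` by the weight `3m - 2n₁ - n₂`. Every coefficient of the recurrence for `b` depends on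
the weight alone, and its nine steps have positive weights `1, …, 9`, so summing the recurrence
over the points of a given weight turns it into the recurrence for `a`, which determines `a`. The
sums are finite because the steps lie in the cone `n₁ + n₂ ≤ m`, which meets the nonnegative
octant in finitely many points of each weight.
-/

section FiberSum

open Function

variable {G H R ι : Type*}

/-- The sum of `b` over the fiber of the grading `ℓ` above `n`; it takes the junk value `0` when
`b` has infinite support on that fiber. -/
noncomputable def fiberSum [AddCommMonoid R] (ℓ : G → H) (b : G → R) (n : H) : R :=
  ∑ᶠ v : ℓ ⁻¹' {n}, b v

variable [AddCommGroup G]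

/-- Translation by `-s` as a bijection between fibers of the grading `ℓ`, used to reindex fiber
sums. -/
def fiberSubRight [AddCommGroup H] (ℓ : G →+ H) (s : G) (n : H) :
    ℓ ⁻¹' {n} ≃ ℓ ⁻¹' {n - ℓ s} :=
  (Equiv.subRight s).subtypeEquiv fun v => by simp

theorem mul_fiberSum_eq_sum_of_recurrence [AddCommGroup H] [NonUnitalNonAssocSemiring R]
    [Fintype ι] {ℓ : G →+ H} {s : ι → G} {b : G → R} {n : H} {r : R} {c : ι → R}
    (hfin : ∀ n, HasFiniteSupport fun v : ℓ ⁻¹' {n} => b v)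
    (hrec : ∀ v, ℓ v = n → r * b v = ∑ i, c i * b (v - s i)) :
    r * fiberSum ℓ b n = ∑ i, c i * fiberSum ℓ b (n - ℓ (s i)) := by
  have hfin_sub (i : ι) : HasFiniteSupport fun v : ℓ ⁻¹' {n} => b (v - s i) :=
    HasFiniteSupport.comp_of_injective (g := fiberSubRight ℓ (s i) n) (Equiv.injective _)
      (hfin (n - ℓ (s i)))
  calc
    r * fiberSum ℓ b n = ∑ᶠ v : ℓ ⁻¹' {n}, ∑ i, c i * b (v - s i) := by
      rw [fiberSum, mul_finsum' _ _ (hfin n)]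
      exact finsum_congr fun v => hrec v v.2
    _ = ∑ i, ∑ᶠ v : ℓ ⁻¹' {n}, c i * b (v - s i) :=
      finsum_sum_comm _ _ fun i _ => (hfin_sub i).subset fun v => right_ne_zero_of_mul
    _ = ∑ i, c i * fiberSum ℓ b (n - ℓ (s i)) := by
      refine Finset.sum_congr rfl fun i _ => ?_
      rw [← mul_finsum' _ _ (hfin_sub i)]
      exact congrArg (c i * ·) <|
        finsum_comp_equiv (fiberSubRight ℓ (s i) n) (f := fun v : ℓ ⁻¹' {n - ℓ (s i)} => b v)

theorem eq_of_int_recurrence [NonUnitalNonAssocSemiring R] [IsLeftCancelMulZero R] [Fintype ι]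
    {k : ι → ℤ} (hk : ∀ i, 0 < k i) {r : ℤ → R} (hr : ∀ n, 0 < n → r n ≠ 0)
    {c : ι → ℤ → R} {f g : ℤ → R} (hfg : ∀ n ≤ 0, f n = g n)
    (hf : ∀ n, 0 < n → r n * f n = ∑ i, c i n * f (n - k i))
    (hg : ∀ n, 0 < n → r n * g n = ∑ i, c i n * g (n - k i)) (n : ℤ) : f n = g n := by
  induction n using Int.strongRec (m := 1) with
  | lt n hn => exact hfg n (by omega)
  | ge n hn ih =>
    refine mul_left_cancel₀ (hr n hn) ?_
    rw [hf n hn, hg n hn]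
    exact Finset.sum_congr rfl fun i _ => by rw [ih _ (sub_lt_self n (hk i))]

theorem eq_fiberSum_of_recurrence [NonUnitalNonAssocSemiring R] [IsLeftCancelMulZero R]
    [Fintype ι] {ℓ : G →+ ℤ} {s : ι → G} (hs : ∀ i, 0 < ℓ (s i)) {r : ℤ → R}
    (hr : ∀ n, 0 < n → r n ≠ 0) {c : ι → ℤ → R} {b : G → R}
    (hb_fin : ∀ n, HasFiniteSupport fun v : ℓ ⁻¹' {n} => b v)
    (hb_zero : ∀ v, ℓ v ≤ 0 → v ≠ 0 → b v = 0)
    (hb_rec : ∀ v, 0 < ℓ v → r (ℓ v) * b v = ∑ i, c i (ℓ v) * b (v - s i))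
    {a : ℤ → R} (ha_neg : ∀ n < 0, a n = 0) (ha_zero : a 0 = b 0)
    (ha_rec : ∀ n, 0 < n → r n * a n = ∑ i, c i n * a (n - ℓ (s i))) (n : ℤ) :
    a n = fiberSum ℓ b n := by
  refine eq_of_int_recurrence hs hr (fun n hn => ?_) ha_rec (fun n hn => ?_) n
  · obtain hn | rfl := hn.lt_or_eq
    · have hb (v : ℓ ⁻¹' {n}) : b v = 0 :=
        hb_zero v (v.2.trans_le hn.le) fun hv => hn.ne (by simpa [hv] using v.2.symm)
      rw [ha_neg n hn, fiberSum, finsum_congr hb, finsum_zero]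
    · have hb (v : ℓ ⁻¹' {0}) (hv : v ≠ ⟨0, map_zero ℓ⟩) : b v = 0 :=
        hb_zero v (le_of_eq v.2) fun h => hv (Subtype.ext h)
      rw [ha_zero, fiberSum, finsum_eq_single _ _ hb]
  · refine mul_fiberSum_eq_sum_of_recurrence hb_fin fun v hv => ?_
    subst hv
    exact hb_rec v hn

theorem subset_addSubmonoid_of_exists_sub_mem {s : ι → G} {S : AddSubmonoid G}
    (hsS : ∀ i, s i ∈ S) {h : G →+ ℤ} (hs : ∀ i, 0 < h (s i)) {T : Set G}
    (hT : ∀ v ∈ T, 0 ≤ h v) (hT_sub : ∀ v ∈ T, v ≠ 0 → ∃ i, v - s i ∈ T) : T ⊆ S := by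
  intro v hv
  induction hn : h v using Int.strongRec (m := 0) generalizing v with
  | lt n hneg => exact absurd (hT v hv) (by omega)
  | ge n _ ih =>
    obtain rfl | hv0 := eq_or_ne v 0
    · exact S.zero_mem
    obtain ⟨i, hi⟩ := hT_sub v hv hv0
    have hlt : h (v - s i) < n := by
      rw [map_sub, hn]
      exact sub_lt_self n (hs i)
    simpa using S.add_mem (ih _ hlt hi rfl) (hsS i)

end FiberSum

section WeightLattice

open Function

/-- The weight `3m - 2n₁ - n₂` grading `ℤ³`, whose fibers index the sums of the coefficients
`b(m, n₁, n₂)`. -/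
def latticeWeight : ℤ × ℤ × ℤ →+ ℤ :=
  AddMonoidHom.mk' (fun v => 3 * v.1 - 2 * v.2.1 - v.2.2) fun v w => by
    simp only [Prod.fst_add, Prod.snd_add]
    ring

/-- The shifts of `(m, n₁, n₂)` in the nine terms of the recurrence for `b`, in the order of these
terms. -/
def recurrenceStep : Fin 9 → ℤ × ℤ × ℤ :=
  ![(1, 0, 0), (1, 1, 0), (1, 0, 1), (2, 1, 0), (2, 0, 1), (2, 0, 0), (3, 1, 0), (3, 0, 1),
    (3, 0, 0)]

/-- The cone `n₁ + n₂ ≤ m` in `ℤ³`, which contains every `recurrenceStep` and therefore confines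
the support of `b`. -/
def stepCone : AddSubmonoid (ℤ × ℤ × ℤ) where
  carrier := {v | v.2.1 + v.2.2 ≤ v.1}
  zero_mem' := le_refl (0 : ℤ)
  add_mem' {v w} hv hw := by
    simp only [Set.mem_ofPred_eq, Prod.fst_add, Prod.snd_add] at hv hw ⊢
    omega

theorem latticeWeight_apply (v : ℤ × ℤ × ℤ) :
    latticeWeight v = 3 * v.1 - 2 * v.2.1 - v.2.2 := rfl

theorem mem_stepCone {v : ℤ × ℤ × ℤ} : v ∈ stepCone ↔ v.2.1 + v.2.2 ≤ v.1 := Iff.rfl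

theorem recurrenceStep_nonneg (i : Fin 9) : 0 ≤ recurrenceStep i := by
  decide +revert

theorem recurrenceStep_fst_pos (i : Fin 9) : 0 < (recurrenceStep i).1 := by
  decide +revert

theorem recurrenceStep_mem_stepCone (i : Fin 9) : recurrenceStep i ∈ stepCone := by
  rw [mem_stepCone]
  decide +revert

theorem latticeWeight_recurrenceStep (i : Fin 9) :
    latticeWeight (recurrenceStep i) = ![3, 1, 2, 4, 5, 6, 7, 8, 9] i := by
  rw [latticeWeight_apply]
  decide +revert

theorem latticeWeight_recurrenceStep_pos (i : Fin 9) : 0 < latticeWeight (recurrenceStep i) := by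
  rw [latticeWeight_recurrenceStep]
  decide +revert

theorem fst_le_latticeWeight {v : ℤ × ℤ × ℤ} (hv : 0 ≤ v) (hv_cone : v ∈ stepCone) :
    v.1 ≤ latticeWeight v := by
  obtain ⟨-, -, h₂⟩ := hv
  simp only [Prod.snd_zero] at h₂
  rw [mem_stepCone] at hv_cone
  rw [latticeWeight_apply]
  omega

variable {R : Type*} {b : ℤ × ℤ × ℤ → R}

theorem support_subset_stepCone [NonUnitalNonAssocSemiring R] [NoZeroDivisors R] {r : ℤ → R}
    (hr : ∀ n ≠ 0, r n ≠ 0) {c : Fin 9 → ℤ → R} (hb_nonneg : ∀ v ∈ support b, 0 ≤ v)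
    (hb_zero : ∀ v, latticeWeight v = 0 → v ≠ 0 → b v = 0)
    (hb_rec : ∀ v, latticeWeight v ≠ 0 → r (latticeWeight v) * b v =
      ∑ i, c i (latticeWeight v) * b (v - recurrenceStep i)) :
    support b ⊆ stepCone := by
  refine subset_addSubmonoid_of_exists_sub_mem recurrenceStep_mem_stepCone
    (h := AddMonoidHom.fst ℤ (ℤ × ℤ)) recurrenceStep_fst_pos (fun v hv => (hb_nonneg v hv).1)
    fun v hv hv0 => ?_
  have hw : latticeWeight v ≠ 0 := fun hw => hv (hb_zero v hw hv0)
  have hsum : ∑ i, c i (latticeWeight v) * b (v - recurrenceStep i) ≠ 0 :=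
    hb_rec v hw ▸ mul_ne_zero (hr _ hw) hv
  obtain ⟨i, -, hi⟩ := Finset.exists_ne_zero_of_sum_ne_zero hsum
  exact ⟨i, right_ne_zero_of_mul hi⟩

theorem hasFiniteSupport_latticeWeight_fiber [Zero R] (hb_nonneg : ∀ v ∈ support b, 0 ≤ v)
    (hb_cone : support b ⊆ stepCone) (n : ℤ) :
    HasFiniteSupport fun v : latticeWeight ⁻¹' {n} => b v := by
  refine ((Set.finite_Icc 0 (n, n, n)).preimage Subtype.val_injective.injOn).subset ?_
  rintro ⟨v, rfl⟩ hv
  have hv_nonneg : 0 ≤ v := hb_nonneg v hv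
  have hv_cone : v.2.1 + v.2.2 ≤ v.1 := mem_stepCone.mp (hb_cone hv)
  have hfst : v.1 ≤ latticeWeight v := fst_le_latticeWeight hv_nonneg hv_cone
  have hsnd := hv_nonneg.2
  exact ⟨hv_nonneg, hfst, (le_add_of_nonneg_right hsnd.2).trans (hv_cone.trans hfst),
    (le_add_of_nonneg_left hsnd.1).trans (hv_cone.trans hfst)⟩

theorem fiberSum_latticeWeight_eq_finsum_nat [AddCommMonoid R]
    (hb_nonneg : ∀ v ∈ support b, 0 ≤ v) (n : ℤ) :
    fiberSum latticeWeight b n =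
      ∑ᶠ v ∈ {v : ℕ × ℕ × ℕ | 3 * (v.1 : ℤ) - 2 * (v.2.1 : ℤ) - (v.2.2 : ℤ) = n},
        b (v.1, v.2.1, v.2.2) := by
  let e : ℕ × ℕ × ℕ → ℤ × ℤ × ℤ := Prod.map (↑) (Prod.map (↑) (↑))
  have he : Injective e :=
    Nat.cast_injective.prodMap (Nat.cast_injective.prodMap Nat.cast_injective)
  rw [fiberSum, finsum_set_coe_eq_finsum_mem]
  refine (finsum_mem_inter_support_eq' _ _ _ ?_).trans (finsum_mem_image (g := e) he.injOn)
  rintro ⟨m, n₁, n₂⟩ hv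
  obtain ⟨hm, hn₁, hn₂⟩ := hb_nonneg _ hv
  lift m to ℕ using hm
  lift n₁ to ℕ using hn₁
  lift n₂ to ℕ using hn₂
  symm
  exact he.mem_set_image (a := (m, n₁, n₂))

/-- The coefficients of the nine terms in the recurrence for `b`, matching `recurrenceStep`: three
depend on the weight, and the last six are constants entering with a minus sign. -/
def recurrenceCoeff [Neg R] (p q t : ℤ → R) (D1 D2 D3 D4 D5 D6 : R) : Fin 9 → ℤ → R :=
  ![p, q, t, fun _ => -D1, fun _ => -D2, fun _ => -D3, fun _ => -D4, fun _ => -D5, fun _ => -D6]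

theorem sum_recurrenceCoeff_mul [NonUnitalNonAssocRing R] (p q t : ℤ → R)
    (D1 D2 D3 D4 D5 D6 : R) (n : ℤ) (f : Fin 9 → R) :
    ∑ i, recurrenceCoeff p q t D1 D2 D3 D4 D5 D6 i n * f i =
      p n * f 0 + q n * f 1 + t n * f 2 - D1 * f 3 - D2 * f 4 - D3 * f 5 - D4 * f 6 - D5 * f 7
        - D6 * f 8 := by
  simp only [Fin.sum_univ_castSucc, Finset.univ_eq_empty, Finset.sum_empty, zero_add,
    sub_eq_add_neg, ← neg_mul]
  rfl

theorem eq_fiberSum_latticeWeight_of_recurrence [NonUnitalNonAssocRing R] [NoZeroDivisors R]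
    {r : ℤ → R} (hr : ∀ n ≠ 0, r n ≠ 0) {c : Fin 9 → ℤ → R}
    (hb_nonneg : ∀ v ∈ support b, 0 ≤ v)
    (hb_zero : ∀ v, latticeWeight v = 0 → v ≠ 0 → b v = 0)
    (hb_rec : ∀ v, 0 ≤ v → latticeWeight v ≠ 0 → r (latticeWeight v) * b v =
      ∑ i, c i (latticeWeight v) * b (v - recurrenceStep i))
    {a : ℤ → R} (ha_neg : ∀ n < 0, a n = 0) (ha_zero : a 0 = b 0)
    (ha_rec : ∀ n, 0 < n → r n * a n =
      ∑ i, c i n * a (n - latticeWeight (recurrenceStep i))) (n : ℤ) :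
    a n = fiberSum latticeWeight b n := by
  have hb_eq_zero (v) (hv : ¬ 0 ≤ v) : b v = 0 := not_not.mp (mt (hb_nonneg v) hv)
  have hb_rec' (v) (hw : latticeWeight v ≠ 0) : r (latticeWeight v) * b v =
      ∑ i, c i (latticeWeight v) * b (v - recurrenceStep i) := by
    by_cases hv : 0 ≤ v
    · exact hb_rec v hv hw
    · have hb_sub (i) : b (v - recurrenceStep i) = 0 := hb_eq_zero _ fun h =>
        hv (h.trans (sub_le_self v (recurrenceStep_nonneg i)))
      simp only [hb_eq_zero v hv, hb_sub, mul_zero, Finset.sum_const_zero]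
  have hb_cone : support b ⊆ stepCone := support_subset_stepCone hr hb_nonneg hb_zero hb_rec'
  have hb_nonpos (v) (hw : latticeWeight v ≤ 0) (hv : v ≠ 0) : b v = 0 := by
    obtain hw | hw := hw.lt_or_eq
    · by_contra hbv
      have hv0 := (hb_nonneg v hbv).1
      exact (hv0.trans (fst_le_latticeWeight (hb_nonneg v hbv) (hb_cone hbv))).not_gt hw
    · exact hb_zero v hw hv
  exact eq_fiberSum_of_recurrence latticeWeight_recurrenceStep_pos (fun n hn => hr n hn.ne')
    (hasFiniteSupport_latticeWeight_fiber hb_nonneg hb_cone) hb_nonpos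
    (fun v hw => hb_rec' v hw.ne') ha_neg ha_zero ha_rec n

end WeightLattice

theorem buhring_a_as_sum_of_b_general {R : Type*} [NonUnitalNonAssocRing R] [NoZeroDivisors R]
    (r p q t : ℤ → R) (D1 D2 D3 D4 D5 D6 : R) (hr : ∀ n ≠ 0, r n ≠ 0)
    (b : ℤ → ℤ → ℤ → R)
    (hb_neg : ∀ m n1 n2 : ℤ, (m < 0 ∨ n1 < 0 ∨ n2 < 0) → b m n1 n2 = 0)
    (hb_zero : ∀ m n1 n2 : ℤ, 3 * m - 2 * n1 - n2 = 0 → (m, n1, n2) ≠ (0, 0, 0) →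
      b m n1 n2 = 0)
    (hb_rec : ∀ m n1 n2 : ℤ, 0 ≤ m → 0 ≤ n1 → 0 ≤ n2 → 3 * m - 2 * n1 - n2 ≠ 0 →
      r (3 * m - 2 * n1 - n2) * b m n1 n2 =
        p (3 * m - 2 * n1 - n2) * b (m - 1) n1 n2
        + q (3 * m - 2 * n1 - n2) * b (m - 1) (n1 - 1) n2
        + t (3 * m - 2 * n1 - n2) * b (m - 1) n1 (n2 - 1)
        - D1 * b (m - 2) (n1 - 1) n2 - D2 * b (m - 2) n1 (n2 - 1) - D3 * b (m - 2) n1 n2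
        - D4 * b (m - 3) (n1 - 1) n2 - D5 * b (m - 3) n1 (n2 - 1) - D6 * b (m - 3) n1 n2)
    (a : ℤ → R) (ha_neg : ∀ n : ℤ, n < 0 → a n = 0) (ha_zero : a 0 = b 0 0 0)
    (ha_rec : ∀ n : ℤ, 1 ≤ n →
      r n * a n = q n * a (n - 1) + t n * a (n - 2) + p n * a (n - 3)
        - D1 * a (n - 4) - D2 * a (n - 5) - D3 * a (n - 6)
        - D4 * a (n - 7) - D5 * a (n - 8) - D6 * a (n - 9)) (n : ℤ) :
    a n =
      ∑ᶠ v ∈ {v : ℕ × ℕ × ℕ | 3 * (v.1 : ℤ) - 2 * (v.2.1 : ℤ) - (v.2.2 : ℤ) = n},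
        b (v.1 : ℤ) (v.2.1 : ℤ) (v.2.2 : ℤ) := by
  let B : ℤ × ℤ × ℤ → R := fun v => b v.1 v.2.1 v.2.2
  have hB_nonneg : ∀ v ∈ Function.support B, 0 ≤ v := by
    rintro ⟨m, n1, n2⟩ hv
    have hneg := mt (hb_neg m n1 n2) hv
    push Not at hneg
    exact hneg
  have hB_rec (v) (hv : 0 ≤ v) (hw : latticeWeight v ≠ 0) : r (latticeWeight v) * B v =
      ∑ i, recurrenceCoeff p q t D1 D2 D3 D4 D5 D6 i (latticeWeight v) *
        B (v - recurrenceStep i) := by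
    rw [sum_recurrenceCoeff_mul]
    simpa [B, recurrenceStep, latticeWeight_apply] using
      hb_rec v.1 v.2.1 v.2.2 hv.1 hv.2.1 hv.2.2 hw
  have ha_rec' (n) (hn : 0 < n) : r n * a n =
      ∑ i, recurrenceCoeff p q t D1 D2 D3 D4 D5 D6 i n *
        a (n - latticeWeight (recurrenceStep i)) :=
    calc
      r n * a n = p n * a (n - 3) + q n * a (n - 1) + t n * a (n - 2) - D1 * a (n - 4)
          - D2 * a (n - 5) - D3 * a (n - 6) - D4 * a (n - 7) - D5 * a (n - 8) - D6 * a (n - 9) := by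
        rw [ha_rec n hn]
        abel
      _ = _ := by simp [sum_recurrenceCoeff_mul, latticeWeight_recurrenceStep]
  rw [eq_fiberSum_latticeWeight_of_recurrence hr hB_nonneg (fun v => hb_zero v.1 v.2.1 v.2.2)
    hB_rec ha_neg ha_zero ha_rec', fiberSum_latticeWeight_eq_finsum_nat hB_nonneg]

theorem buhring_a_as_sum_of_b
    (kap s0 t10 t20 tau L B1 B2 D1 D2 D3 D4 D5 D6 : ℝ)
    (hkap : kap = 1 ∨ kap = -1) (hs0 : s0 ≠ 0)
    (b : ℤ → ℤ → ℤ → ℝ)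
    (hb_neg : ∀ m n1 n2 : ℤ, (m < 0 ∨ n1 < 0 ∨ n2 < 0) → b m n1 n2 = 0)
    (hb_one : b 0 0 0 = 1)
    (hb_zero : ∀ m n1 n2 : ℤ, 3 * m - 2 * n1 - n2 = 0 → (m, n1, n2) ≠ (0, 0, 0) →
      b m n1 n2 = 0)
    (hb_rec : ∀ m n1 n2 : ℤ, 0 ≤ m → 0 ≤ n1 → 0 ≤ n2 → 3 * m - 2 * n1 - n2 ≠ 0 →
      6 * kap * s0 * ((3 * m - 2 * n1 - n2 : ℤ) : ℝ) * b m n1 n2 =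
        ((((3 * m - 2 * n1 - n2 : ℤ) : ℝ) + tau - 3) ^ 2 - L ^ 2) * b (m - 1) n1 n2
        + (-4 * kap * t10 * (((3 * m - 2 * n1 - n2 : ℤ) : ℝ) + tau - 2) + t20 ^ 2 - B2) *
            b (m - 1) (n1 - 1) n2
        + (-2 * kap * t20 * (((3 * m - 2 * n1 - n2 : ℤ) : ℝ) + tau - 5 / 2) - B1) *
            b (m - 1) n1 (n2 - 1)
        - D1 * b (m - 2) (n1 - 1) n2 - D2 * b (m - 2) n1 (n2 - 1) - D3 * b (m - 2) n1 n2
        - D4 * b (m - 3) (n1 - 1) n2 - D5 * b (m - 3) n1 (n2 - 1) - D6 * b (m - 3) n1 n2)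
    (a : ℤ → ℝ)
    (ha_neg : ∀ n : ℤ, n < 0 → a n = 0)
    (ha_one : a 0 = 1)
    (ha_rec : ∀ n : ℤ, 1 ≤ n →
      6 * kap * s0 * (n : ℝ) * a n =
        (-4 * kap * t10 * ((n : ℝ) + tau - 2) + t20 ^ 2 - B2) * a (n - 1)
        + (-2 * kap * t20 * ((n : ℝ) + tau - 5 / 2) - B1) * a (n - 2)
        + (((n : ℝ) + tau - 3) ^ 2 - L ^ 2) * a (n - 3)
        - D1 * a (n - 4) - D2 * a (n - 5) - D3 * a (n - 6)
        - D4 * a (n - 7) - D5 * a (n - 8) - D6 * a (n - 9)) :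
    ∀ n : ℕ,
      a (n : ℤ) =
        ∑ᶠ p ∈ {p : ℕ × ℕ × ℕ |
            3 * (p.1 : ℤ) - 2 * (p.2.1 : ℤ) - (p.2.2 : ℤ) = (n : ℤ)},
          b (p.1 : ℤ) (p.2.1 : ℤ) (p.2.2 : ℤ) := by
  have hr (n : ℤ) (hn : n ≠ 0) : 6 * kap * s0 * (n : ℝ) ≠ 0 := by
    obtain rfl | rfl := hkap <;> simp [hs0, hn]
  exact fun n => buhring_a_as_sum_of_b_general (fun n => 6 * kap * s0 * n)
    (fun n => (n + tau - 3) ^ 2 - L ^ 2)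
    (fun n => -4 * kap * t10 * (n + tau - 2) + t20 ^ 2 - B2)
    (fun n => -2 * kap * t20 * (n + tau - 5 / 2) - B1) D1 D2 D3 D4 D5 D6 hr b hb_neg hb_zero
    hb_rec a ha_neg (ha_one.trans hb_one.symm) ha_rec n
end

section
/- For every natural number N, a(3N + 2) = Σ_{l=1}^{2N+2} Σ_{(n1, n2) ∈ ℕ², 2n1 + n2 = 3l − 2} b(N + l, n1, n2), where each inner sum is finite since 2n1 + n2 = 3l − 2 forces n1 ≤ ⌊(3l−2)/2⌋ and n2 ≤ 3l − 2. -/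
open scoped BigOperators

/-!
Give the index `(m, n1, n2)` the weight `3 * m - 2 * n1 - n2`. The coefficients of the recurrence
for `b` depend on the index only through its weight, and its nine shifts lower the weight by
`1, …, 9`. Summing it over all indices of weight `w` therefore gives the recurrence for `a w`, and a
recurrence with positive shifts has only one solution normalized at the origin, so `a w` is the sum
of `b` over the indices of weight `w`. These sums are finite: each shift lowers the weight by at
least as much as it lowers `m`, so `b` vanishes where the weight is less than `m`, and on the
remaining indices of weight `w` one has `0 ≤ m ≤ w`. In weight `3 * N + 2` one writes `m = N + l`.
-/

theorem finsum_mem_sum_comm {α ι M : Type*} [AddCommMonoid M] {s : Set α} (t : Finset ι)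
    {f : ι → α → M} (hf : ∀ i ∈ t, (s ∩ (f i).support).Finite) :
    ∑ᶠ a ∈ s, ∑ i ∈ t, f i a = ∑ i ∈ t, ∑ᶠ a ∈ s, f i a := by
  have hind : s.indicator (fun a => ∑ i ∈ t, f i a) = fun a => ∑ i ∈ t, s.indicator (f i) a := by
    simpa only [Finset.sum_fn] using Finset.indicator_sum t s f
  simp only [finsum_mem_def, hind]
  refine finsum_sum_comm t (fun a i => s.indicator (f i) a) fun i hi => ?_
  rw [Function.HasFiniteSupport, Set.support_indicator]
  exact hf i hi

/-- The sum of the array `b` over the indices of weight `w`, for the weight `ω`. As a `finsum`, it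
is `0` if `b` has infinitely many nonzero entries of weight `w`. -/
noncomputable def fibreSum {G M : Type*} [AddCommGroup G] [AddCommMonoid M] (ω : G →+ ℤ) (b : G → M)
    (w : ℤ) : M :=
  ∑ᶠ g ∈ ω ⁻¹' {w}, b g

section FibreSum

variable {G : Type*} [AddCommGroup G] {ω : G →+ ℤ}

theorem bijOn_sub_preimage_singleton (w : ℤ) (s : G) :
    Set.BijOn (· - s) (ω ⁻¹' {w}) (ω ⁻¹' {w - ω s}) := by
  refine ⟨fun g hg => ?_, sub_left_injective.injOn,
    fun g hg => ⟨g + s, ?_, add_sub_cancel_right g s⟩⟩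
  · simpa using hg
  · simpa [eq_sub_iff_add_eq] using hg

theorem finsum_mem_preimage_singleton_sub {M : Type*} [AddCommMonoid M] (b : G → M) (w : ℤ)
    (s : G) : ∑ᶠ g ∈ ω ⁻¹' {w}, b (g - s) = fibreSum ω b (w - ω s) :=
  finsum_mem_eq_of_bijOn _ (bijOn_sub_preimage_singleton w s) fun _ _ => rfl

theorem fibreSum_recurrence {ι R : Type*} [Fintype ι] [Ring R] [NoZeroDivisors R] {b : G → R}
    (hfin : ∀ w, (ω ⁻¹' {w} ∩ b.support).Finite) {w : ℤ} {σ : ι → G} {c : R} {C : ι → R}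
    (hrec : ∀ g, ω g = w → c * b g = ∑ i, C i * b (g - σ i)) :
    c * fibreSum ω b w = ∑ i, C i * fibreSum ω b (w - ω (σ i)) := by
  have hshift : ∀ i, (ω ⁻¹' {w} ∩ (fun g => C i * b (g - σ i)).support).Finite := fun i =>
    ((hfin (w - ω (σ i))).preimage sub_left_injective.injOn).subset fun g hg =>
      ⟨(bijOn_sub_preimage_singleton w (σ i)).mapsTo hg.1, right_ne_zero_of_mul hg.2⟩
  calc c * fibreSum ω b w = ∑ᶠ g ∈ ω ⁻¹' {w}, c * b g := mul_finsum_mem _ _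
    _ = ∑ᶠ g ∈ ω ⁻¹' {w}, ∑ i, C i * b (g - σ i) := finsum_mem_congr rfl hrec
    _ = ∑ i, ∑ᶠ g ∈ ω ⁻¹' {w}, C i * b (g - σ i) := finsum_mem_sum_comm _ fun i _ => hshift i
    _ = ∑ i, C i * fibreSum ω b (w - ω (σ i)) := by
      simp only [← mul_finsum_mem, finsum_mem_preimage_singleton_sub]

end FibreSum

@[elab_as_elim]
theorem induction_of_shift {G ι : Type*} [AddCommGroup G] [Preorder G] {μ : G →+ ℤ} {σ : ι → G}
    (hμ : ∀ g, 0 ≤ g → 0 ≤ μ g) (hμσ : ∀ i, 1 ≤ μ (σ i)) {P : G → Prop}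
    (not_nonneg : ∀ g, ¬0 ≤ g → P g) (nonneg : ∀ g, 0 ≤ g → (∀ i, P (g - σ i)) → P g) (g : G) :
    P g := by
  induction hM : (μ g + 1).toNat using Nat.strong_induction_on generalizing g with
  | _ M ih =>
    subst hM
    by_cases hg : 0 ≤ g
    · refine nonneg g hg fun i => ih _ ?_ _ rfl
      have := hμ g hg
      have := hμσ i
      rw [map_sub]
      omega
    · exact not_nonneg g hg

/-- `b` is the normalized solution of the linear recurrence with shifts `σ i`, whose leading
coefficient `c` and other coefficients `C` depend on the index only through its weight `ω`:
it is supported on `0 ≤ g`, and its only nonzero entry of weight `0` is `b 0 = 1`. One-index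
recurrences are the case where `ω` is the identity of `ℤ`. -/
structure IsNormalizedSolution {G ι R : Type*} [AddCommGroup G] [Preorder G] [Fintype ι] [Ring R]
    (ω : G →+ ℤ) (σ : ι → G) (c : ℤ → R) (C : ℤ → ι → R) (b : G → R) : Prop where
  eq_zero_of_not_nonneg : ∀ g, ¬0 ≤ g → b g = 0
  apply_zero : b 0 = 1
  eq_zero_of_weight_eq_zero : ∀ g, ω g = 0 → g ≠ 0 → b g = 0
  recurrence : ∀ g, 0 ≤ g → ω g ≠ 0 → c (ω g) * b g = ∑ i, C (ω g) i * b (g - σ i)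

namespace IsNormalizedSolution

variable {G ι R : Type*} [AddCommGroup G] [Preorder G] [Fintype ι] [Ring R]
  {ω μ : G →+ ℤ} {σ : ι → G} {c : ℤ → R} {C : ℤ → ι → R} {b b' : G → R}

theorem recurrence_of_weight_ne_zero [IsOrderedAddMonoid G] (hb : IsNormalizedSolution ω σ c C b)
    (hσ : ∀ i, 0 ≤ σ i) (g : G) (hw : ω g ≠ 0) :
    c (ω g) * b g = ∑ i, C (ω g) i * b (g - σ i) := by
  by_cases hpos : 0 ≤ g
  · exact hb.recurrence g hpos hw
  have hprev : ∀ i, b (g - σ i) = 0 := fun i =>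
    hb.eq_zero_of_not_nonneg _ fun h => hpos ((hσ i).trans (sub_nonneg.mp h))
  simp only [hb.eq_zero_of_not_nonneg g hpos, hprev, mul_zero, Finset.sum_const_zero]

theorem unique [NoZeroDivisors R] (hb : IsNormalizedSolution ω σ c C b)
    (hb' : IsNormalizedSolution ω σ c C b') (hc : ∀ w ≠ 0, c w ≠ 0) (hμ : ∀ g, 0 ≤ g → 0 ≤ μ g)
    (hμσ : ∀ i, 1 ≤ μ (σ i)) : b = b' := by
  funext g
  induction g using induction_of_shift hμ hμσ with
  | not_nonneg g hg => rw [hb.eq_zero_of_not_nonneg g hg, hb'.eq_zero_of_not_nonneg g hg]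
  | nonneg g hg ih =>
    by_cases hw : ω g = 0
    · by_cases hg0 : g = 0
      · rw [hg0, hb.apply_zero, hb'.apply_zero]
      · rw [hb.eq_zero_of_weight_eq_zero g hw hg0, hb'.eq_zero_of_weight_eq_zero g hw hg0]
    · refine mul_left_cancel₀ (hc _ hw) ?_
      simp only [hb.recurrence g hg hw, hb'.recurrence g hg hw, ih]

theorem eq_zero_of_weight_lt [NoZeroDivisors R] (hb : IsNormalizedSolution ω σ c C b)
    (hc : ∀ w ≠ 0, c w ≠ 0) (hμ : ∀ g, 0 ≤ g → 0 ≤ μ g) (hμσ : ∀ i, 1 ≤ μ (σ i))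
    (hμω : ∀ i, μ (σ i) ≤ ω (σ i)) (g : G) (hlt : ω g < μ g) : b g = 0 := by
  induction g using induction_of_shift hμ hμσ with
  | not_nonneg g hg => exact hb.eq_zero_of_not_nonneg g hg
  | nonneg g hg ih =>
    by_cases hw : ω g = 0
    · exact hb.eq_zero_of_weight_eq_zero g hw fun h => by simp [h] at hlt
    have hprev : ∀ i, b (g - σ i) = 0 := fun i => ih i (by
      rw [map_sub, map_sub]
      have := hμω i
      omega)
    have hrec := hb.recurrence g hg hw
    simp only [hprev, mul_zero, Finset.sum_const_zero] at hrec
    exact (mul_eq_zero_iff_left (hc _ hw)).mp hrec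

theorem fibreSum [IsOrderedAddMonoid G] [NoZeroDivisors R]
    (hb : IsNormalizedSolution ω σ c C b) (hσ : ∀ i, 0 ≤ σ i)
    (hfin : ∀ w, (ω ⁻¹' {w} ∩ b.support).Finite) (hneg : ∀ g, ω g < 0 → b g = 0) :
    IsNormalizedSolution (.id ℤ) (ω ∘ σ) c C (fibreSum ω b) where
  eq_zero_of_not_nonneg w hw :=
    finsum_mem_of_eqOn_zero fun g (hg : ω g = w) => hneg g (hg.trans_lt (not_le.mp hw))
  apply_zero := by
    rw [_root_.fibreSum, finsum_mem_inter_support_eq' b _ {0}, finsum_mem_singleton, hb.apply_zero]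
    intro g hg
    refine ⟨fun hw => by_contra fun h => hg (hb.eq_zero_of_weight_eq_zero g hw h), ?_⟩
    rintro rfl
    exact map_zero ω
  eq_zero_of_weight_eq_zero w hw hw' := absurd hw hw'
  recurrence w _ hw := fibreSum_recurrence hfin fun g hg => by
    simpa only [hg] using! hb.recurrence_of_weight_ne_zero hσ g (hg.trans_ne hw)

end IsNormalizedSolution

namespace Buhring

/-- The weight `3 * m - 2 * n1 - n2` of the index `(m, n1, n2)`, on which the coefficients of the
recurrence for `b` depend. -/
def weight : ℤ × ℤ × ℤ →+ ℤ where
  toFun g := 3 * g.1 - 2 * g.2.1 - g.2.2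
  map_zero' := rfl
  map_add' g h := by
    simp only [Prod.fst_add, Prod.snd_add]
    ring

/-- The shifts of the recurrence for `b`, listed by their weights `1, …, 9`. -/
def shift : Fin 9 → ℤ × ℤ × ℤ :=
  ![(1, 1, 0), (1, 0, 1), (1, 0, 0), (2, 1, 0), (2, 0, 1), (2, 0, 0), (3, 1, 0), (3, 0, 1),
    (3, 0, 0)]

/-- The coefficients of the recurrences for `b` and `a` in weight `w`, in the order of `shift`. -/
def coeff {K : Type*} [Field K] (kap t10 t20 tau L B1 B2 D1 D2 D3 D4 D5 D6 : K) (w : ℤ) :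
    Fin 9 → K :=
  ![-4 * kap * t10 * ((w : K) + tau - 2) + t20 ^ 2 - B2,
    -2 * kap * t20 * ((w : K) + tau - 5 / 2) - B1,
    ((w : K) + tau - 3) ^ 2 - L ^ 2, -D1, -D2, -D3, -D4, -D5, -D6]

theorem weight_apply (m n1 n2 : ℤ) : weight (m, n1, n2) = 3 * m - 2 * n1 - n2 := rfl

theorem weight_shift (i : Fin 9) : weight (shift i) = i + 1 := by
  fin_cases i <;> rfl

theorem shift_nonneg (i : Fin 9) : 0 ≤ shift i := by
  revert i
  decide

theorem one_le_fst_shift (i : Fin 9) : 1 ≤ (shift i).1 := by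
  revert i
  decide

theorem fst_shift_le_weight (i : Fin 9) : (shift i).1 ≤ weight (shift i) := by
  revert i
  decide

theorem sum_coeff_mul {K : Type*} [Field K]
    (kap t10 t20 tau L B1 B2 D1 D2 D3 D4 D5 D6 : K) (w : ℤ) (x : Fin 9 → K) :
    ∑ i, coeff kap t10 t20 tau L B1 B2 D1 D2 D3 D4 D5 D6 w i * x i =
      (-4 * kap * t10 * ((w : K) + tau - 2) + t20 ^ 2 - B2) * x 0
      + (-2 * kap * t20 * ((w : K) + tau - 5 / 2) - B1) * x 1
      + (((w : K) + tau - 3) ^ 2 - L ^ 2) * x 2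
      - D1 * x 3 - D2 * x 4 - D3 * x 5 - D4 * x 6 - D5 * x 7 - D6 * x 8 := by
  simp only [coeff, Fin.sum_univ_succ, Fin.sum_univ_zero, Matrix.cons_val_zero,
    Matrix.cons_val_succ, Fin.succ_zero_eq_one, Fin.reduceSucc]
  ring

/-- The nonnegative indices of weight `n` with first entry `m`. They correspond to the pairs
`(n1, n2)` of one inner sum. -/
def slice (n m : ℕ) : Set (ℤ × ℤ × ℤ) :=
  {g | 0 ≤ g ∧ g.1 = m ∧ weight g = n}

theorem mem_slice {n m : ℕ} {m' n1 n2 : ℤ} :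
    (m', n1, n2) ∈ slice n m ↔
      (0 ≤ m' ∧ 0 ≤ n1 ∧ 0 ≤ n2) ∧ m' = m ∧ 3 * m' - 2 * n1 - n2 = n := Iff.rfl

theorem finite_slice (n m : ℕ) : (slice n m).Finite := by
  refine (Set.finite_Icc 0 ((m : ℤ), 3 * (m : ℤ), 3 * (m : ℤ))).subset ?_
  rintro ⟨m', n1, n2⟩ hg
  rw [mem_slice] at hg
  simp only [Set.mem_Icc, Prod.le_def, Prod.fst_zero, Prod.snd_zero]
  omega

theorem pairwise_disjoint_slice (n : ℕ) : Pairwise (Function.onFun Disjoint (slice n)) :=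
  fun _ _ hne => Set.disjoint_left.mpr fun _ hg hg' =>
    hne (Nat.cast_injective (hg.2.1.symm.trans hg'.2.1))

theorem weight_eq_iff_mem_iUnion_slice {g : ℤ × ℤ × ℤ} (hpos : 0 ≤ g) (hle : g.1 ≤ weight g)
    {n : ℕ} : weight g = n ↔ g ∈ ⋃ m ∈ (Finset.range (n + 1) : Set ℕ), slice n m := by
  simp only [Set.mem_iUnion, exists_prop, Finset.coe_range, Set.mem_Iio]
  refine ⟨fun hw => ?_, fun ⟨_, _, hg⟩ => hg.2.2⟩
  have hm := hpos.1
  rw [Prod.fst_zero] at hm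
  exact ⟨g.1.toNat, by omega, hpos, (Int.toNat_of_nonneg hm).symm, hw⟩

section WeightSum

variable {M : Type*} [AddCommMonoid M]

theorem finite_weight_preimage_inter_support {b : ℤ × ℤ × ℤ → M} (hneg : ∀ g, ¬0 ≤ g → b g = 0)
    (hlt : ∀ g, weight g < g.1 → b g = 0) (w : ℤ) : (weight ⁻¹' {w} ∩ b.support).Finite := by
  refine (Set.finite_Icc 0 (w, 2 * w, 2 * w)).subset ?_
  rintro ⟨m, n1, n2⟩ ⟨hw, hb⟩
  have hpos := not_imp_comm.mp (hneg _) hb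
  have hle := mt (hlt _) hb
  simp only [Set.mem_preimage, Set.mem_singleton_iff, weight_apply, not_lt, Set.mem_Icc,
    Prod.le_def, Prod.fst_zero, Prod.snd_zero] at *
  omega

theorem finsum_mem_slice (b : ℤ × ℤ × ℤ → M) (n m : ℕ) :
    ∑ᶠ g ∈ slice n m, b g = ∑ᶠ p ∈ {p : ℕ × ℕ | 2 * p.1 + p.2 + n = 3 * m}, b (m, p.1, p.2) := by
  symm
  refine finsum_mem_eq_of_bijOn (fun p => ((m : ℤ), (p.1 : ℤ), (p.2 : ℤ))) ⟨?_, ?_, ?_⟩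
    fun _ _ => rfl
  · intro p hp
    have hpm : 2 * p.1 + p.2 + n = 3 * m := hp
    rw [mem_slice]
    omega
  · intro p _ q _ h
    simpa [Prod.ext_iff] using h
  · rintro ⟨m', n1, n2⟩ hg
    rw [mem_slice] at hg
    refine ⟨(n1.toNat, n2.toNat), ?_, ?_⟩
    · simp only [Set.mem_ofPred_eq]
      omega
    · simp only [Prod.mk.injEq]
      omega

theorem fibreSum_weight_eq_sum_range {b : ℤ × ℤ × ℤ → M} (hneg : ∀ g, ¬0 ≤ g → b g = 0)
    (hlt : ∀ g, weight g < g.1 → b g = 0) (n : ℕ) :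
    fibreSum weight b n = ∑ m ∈ Finset.range (n + 1),
      ∑ᶠ p ∈ {p : ℕ × ℕ | 2 * p.1 + p.2 + n = 3 * m}, b (m, p.1, p.2) := by
  calc fibreSum weight b n
      = ∑ᶠ g ∈ ⋃ m ∈ (Finset.range (n + 1) : Set ℕ), slice n m, b g :=
        finsum_mem_inter_support_eq' _ _ _ fun g hg =>
          weight_eq_iff_mem_iUnion_slice (not_imp_comm.mp (hneg g) hg) (not_lt.mp (mt (hlt g) hg))
    _ = ∑ᶠ m ∈ (Finset.range (n + 1) : Set ℕ), ∑ᶠ g ∈ slice n m, b g :=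
        finsum_mem_biUnion ((pairwise_disjoint_slice n).set_pairwise _) (Finset.finite_toSet _)
          fun m _ => finite_slice n m
    _ = ∑ m ∈ Finset.range (n + 1),
          ∑ᶠ p ∈ {p : ℕ × ℕ | 2 * p.1 + p.2 + n = 3 * m}, b (m, p.1, p.2) := by
        simp only [finsum_mem_coe_finset, finsum_mem_slice]

theorem sum_range_three_mul_add_two (f : ℕ → ℕ × ℕ → M) (N : ℕ) :
    ∑ m ∈ Finset.range (3 * N + 2 + 1),
        ∑ᶠ p ∈ {p : ℕ × ℕ | 2 * p.1 + p.2 + (3 * N + 2) = 3 * m}, f m p =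
      ∑ l ∈ Finset.Icc 1 (2 * N + 2),
        ∑ᶠ p ∈ {p : ℕ × ℕ | 2 * p.1 + p.2 = 3 * l - 2}, f (N + l) p := by
  symm
  refine Finset.sum_of_injOn (N + ·) (add_right_injective N).injOn ?_ ?_ ?_
  · intro l hl
    simp only [Finset.coe_Icc, Set.mem_Icc, Finset.coe_range, Set.mem_Iio] at hl ⊢
    omega
  · intro m hm hm'
    have hmN : m ≤ N := by
      by_contra! h
      refine hm' ⟨m - N, ?_, by simp only; omega⟩
      simp only [Finset.mem_range, Finset.coe_Icc, Set.mem_Icc] at hm ⊢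
      omega
    exact finsum_mem_of_eqOn_zero fun p (hp : _ = _) => by omega
  · intro l hl
    have hl1 := (Finset.mem_Icc.mp hl).1
    refine finsum_mem_congr (Set.ext fun p => ?_) fun _ _ => rfl
    simp only [Set.mem_ofPred_eq]
    omega

end WeightSum

end Buhring

theorem buhring_a_three_N_plus_two_general {K : Type*} [Field K] [CharZero K]
    (kap s0 t10 t20 tau L B1 B2 D1 D2 D3 D4 D5 D6 : K)
    (hkap : kap ≠ 0) (hs0 : s0 ≠ 0)
    (b : ℤ → ℤ → ℤ → K)
    (hb_neg : ∀ m n1 n2 : ℤ, (m < 0 ∨ n1 < 0 ∨ n2 < 0) → b m n1 n2 = 0)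
    (hb_one : b 0 0 0 = 1)
    (hb_zero : ∀ m n1 n2 : ℤ, 3 * m - 2 * n1 - n2 = 0 → (m, n1, n2) ≠ (0, 0, 0) →
      b m n1 n2 = 0)
    (hb_rec : ∀ m n1 n2 : ℤ, 0 ≤ m → 0 ≤ n1 → 0 ≤ n2 → 3 * m - 2 * n1 - n2 ≠ 0 →
      6 * kap * s0 * ((3 * m - 2 * n1 - n2 : ℤ) : K) * b m n1 n2 =
        ((((3 * m - 2 * n1 - n2 : ℤ) : K) + tau - 3) ^ 2 - L ^ 2) * b (m - 1) n1 n2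
        + (-4 * kap * t10 * (((3 * m - 2 * n1 - n2 : ℤ) : K) + tau - 2) + t20 ^ 2 - B2) *
            b (m - 1) (n1 - 1) n2
        + (-2 * kap * t20 * (((3 * m - 2 * n1 - n2 : ℤ) : K) + tau - 5 / 2) - B1) *
            b (m - 1) n1 (n2 - 1)
        - D1 * b (m - 2) (n1 - 1) n2 - D2 * b (m - 2) n1 (n2 - 1) - D3 * b (m - 2) n1 n2
        - D4 * b (m - 3) (n1 - 1) n2 - D5 * b (m - 3) n1 (n2 - 1) - D6 * b (m - 3) n1 n2)
    (a : ℤ → K)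
    (ha_neg : ∀ n : ℤ, n < 0 → a n = 0)
    (ha_one : a 0 = 1)
    (ha_rec : ∀ n : ℤ, 1 ≤ n →
      6 * kap * s0 * (n : K) * a n =
        (-4 * kap * t10 * ((n : K) + tau - 2) + t20 ^ 2 - B2) * a (n - 1)
        + (-2 * kap * t20 * ((n : K) + tau - 5 / 2) - B1) * a (n - 2)
        + (((n : K) + tau - 3) ^ 2 - L ^ 2) * a (n - 3)
        - D1 * a (n - 4) - D2 * a (n - 5) - D3 * a (n - 6)
        - D4 * a (n - 7) - D5 * a (n - 8) - D6 * a (n - 9)) :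
    ∀ n : ℕ, a n = ∑ m ∈ Finset.range (n + 1),
      ∑ᶠ p ∈ {p : ℕ × ℕ | 2 * p.1 + p.2 + n = 3 * m}, b m p.1 p.2 := by
  let c : ℤ → K := fun w => 6 * kap * s0 * w
  let C := Buhring.coeff kap t10 t20 tau L B1 B2 D1 D2 D3 D4 D5 D6
  have hc : ∀ w ≠ 0, c w ≠ 0 := fun w hw =>
    mul_ne_zero (mul_ne_zero (mul_ne_zero (by norm_num) hkap) hs0) (Int.cast_ne_zero.mpr hw)
  have hb : IsNormalizedSolution Buhring.weight Buhring.shift c C fun g => b g.1 g.2.1 g.2.2 :=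
    { eq_zero_of_not_nonneg := fun g hg => hb_neg _ _ _ (by
        simp only [Prod.le_def, Prod.fst_zero, Prod.snd_zero] at hg
        omega)
      apply_zero := hb_one
      eq_zero_of_weight_eq_zero := fun g hw hg => hb_zero _ _ _ hw hg
      recurrence := by
        rintro ⟨m, n1, n2⟩ ⟨hm, hn1, hn2⟩ hw
        rw [Buhring.sum_coeff_mul]
        simp only [Buhring.weight_apply, Buhring.shift, Matrix.cons_val, Prod.mk_sub_mk, sub_zero]
        linear_combination hb_rec m n1 n2 hm hn1 hn2 hw }
  have ha : IsNormalizedSolution (.id ℤ) (Buhring.weight ∘ Buhring.shift) c C a :=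
    { eq_zero_of_not_nonneg := fun n hn => ha_neg n (not_le.mp hn)
      apply_zero := ha_one
      eq_zero_of_weight_eq_zero := fun n hn hn' => absurd hn hn'
      recurrence := fun n hn hn' => by
        rw [Buhring.sum_coeff_mul]
        simp only [Function.comp_apply, Buhring.weight_shift]
        exact ha_rec n (lt_of_le_of_ne hn (Ne.symm hn')) }
  have hlt := hb.eq_zero_of_weight_lt (μ := .fst ℤ (ℤ × ℤ)) hc (fun _ h => h.1)
    Buhring.one_le_fst_shift Buhring.fst_shift_le_weight
  have hfin := Buhring.finite_weight_preimage_inter_support hb.eq_zero_of_not_nonneg hlt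
  have hneg : ∀ g : ℤ × ℤ × ℤ, Buhring.weight g < 0 → b g.1 g.2.1 g.2.2 = 0 := fun g hw => by
    by_cases hg : 0 ≤ g
    · exact hlt g (hw.trans_le hg.1)
    · exact hb.eq_zero_of_not_nonneg g hg
  have ha_eq : a = fibreSum Buhring.weight fun g => b g.1 g.2.1 g.2.2 :=
    ha.unique (hb.fibreSum Buhring.shift_nonneg hfin hneg) (μ := .id ℤ) hc (fun _ h => h)
      fun i => (Buhring.one_le_fst_shift i).trans (Buhring.fst_shift_le_weight i)
  intro n
  rw [ha_eq, Buhring.fibreSum_weight_eq_sum_range hb.eq_zero_of_not_nonneg hlt]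

theorem buhring_a_three_N_plus_two
    (kap s0 t10 t20 tau L B1 B2 D1 D2 D3 D4 D5 D6 : ℝ)
    (hkap : kap = 1 ∨ kap = -1) (hs0 : s0 ≠ 0)
    (b : ℤ → ℤ → ℤ → ℝ)
    (hb_neg : ∀ m n1 n2 : ℤ, (m < 0 ∨ n1 < 0 ∨ n2 < 0) → b m n1 n2 = 0)
    (hb_one : b 0 0 0 = 1)
    (hb_zero : ∀ m n1 n2 : ℤ, 3 * m - 2 * n1 - n2 = 0 → (m, n1, n2) ≠ (0, 0, 0) →
      b m n1 n2 = 0)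
    (hb_rec : ∀ m n1 n2 : ℤ, 0 ≤ m → 0 ≤ n1 → 0 ≤ n2 → 3 * m - 2 * n1 - n2 ≠ 0 →
      6 * kap * s0 * ((3 * m - 2 * n1 - n2 : ℤ) : ℝ) * b m n1 n2 =
        ((((3 * m - 2 * n1 - n2 : ℤ) : ℝ) + tau - 3) ^ 2 - L ^ 2) * b (m - 1) n1 n2
        + (-4 * kap * t10 * (((3 * m - 2 * n1 - n2 : ℤ) : ℝ) + tau - 2) + t20 ^ 2 - B2) *
            b (m - 1) (n1 - 1) n2
        + (-2 * kap * t20 * (((3 * m - 2 * n1 - n2 : ℤ) : ℝ) + tau - 5 / 2) - B1) *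
            b (m - 1) n1 (n2 - 1)
        - D1 * b (m - 2) (n1 - 1) n2 - D2 * b (m - 2) n1 (n2 - 1) - D3 * b (m - 2) n1 n2
        - D4 * b (m - 3) (n1 - 1) n2 - D5 * b (m - 3) n1 (n2 - 1) - D6 * b (m - 3) n1 n2)
    (a : ℤ → ℝ)
    (ha_neg : ∀ n : ℤ, n < 0 → a n = 0)
    (ha_one : a 0 = 1)
    (ha_rec : ∀ n : ℤ, 1 ≤ n →
      6 * kap * s0 * (n : ℝ) * a n =
        (-4 * kap * t10 * ((n : ℝ) + tau - 2) + t20 ^ 2 - B2) * a (n - 1)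
        + (-2 * kap * t20 * ((n : ℝ) + tau - 5 / 2) - B1) * a (n - 2)
        + (((n : ℝ) + tau - 3) ^ 2 - L ^ 2) * a (n - 3)
        - D1 * a (n - 4) - D2 * a (n - 5) - D3 * a (n - 6)
        - D4 * a (n - 7) - D5 * a (n - 8) - D6 * a (n - 9)) :
    ∀ N : ℕ,
      a ((3 * N + 2 : ℕ) : ℤ) =
        ∑ l ∈ Finset.Icc 1 (2 * N + 2),
          ∑ᶠ p ∈ {p : ℕ × ℕ | 2 * p.1 + p.2 = 3 * l - 2},
            b ((N + l : ℕ) : ℤ) (p.1 : ℤ) (p.2 : ℤ) := by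
  intro N
  rw [buhring_a_three_N_plus_two_general kap s0 t10 t20 tau L B1 B2 D1 D2 D3 D4 D5 D6
    (by rcases hkap with rfl | rfl <;> norm_num) hs0 b hb_neg hb_one hb_zero hb_rec a ha_neg ha_one
    ha_rec, Buhring.sum_range_three_mul_add_two fun m p => b m p.1 p.2]
end

section
/- If D3 = 0 and D6 = 0, then for every natural number m, b(m, 0, 0) = (2κ·s0)^{−m} · ((τ − L)/3)_m · ((τ + L)/3)_m / m!. -/
open scoped BigOperators

/-!
On the axis `n1 = n2 = 0` every term of the recurrence with a lowered `n1` or `n2` vanishes, and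
`D3 = D6 = 0` removes the terms of depth two and three. What is left is a first-order recurrence
whose coefficient factors, `(3k + tau)² - L² = 9 (k + (tau - L)/3) (k + (tau + L)/3)`, so that it
is the recurrence of the coefficients of a hypergeometric series.
-/

section

variable {K : Type*} [Field K]

theorem eq_ascPochhammer_div_factorial_of_two_term_recurrence [CharZero K] {c x y : K}
    (hc : c ≠ 0) {a : ℕ → K}
    (ha : ∀ k : ℕ, c * (k + 1) * a (k + 1) = (x + k) * (y + k) * a k) (m : ℕ) :
    a m = c ^ (-(m : ℤ)) * (ascPochhammer K m).eval x * (ascPochhammer K m).eval y /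
      (m.factorial : K) * a 0 := by
  induction m with
  | zero => simp
  | succ k ih =>
    have hk : (k : K) + 1 ≠ 0 := k.cast_add_one_ne_zero
    have hstep : a (k + 1) = (x + k) * (y + k) / (c * (k + 1)) * a k := by
      rw [div_mul_eq_mul_div, eq_div_iff (mul_ne_zero hc hk), mul_comm, ha]
    rw [zpow_neg, zpow_natCast] at ih ⊢
    rw [hstep, ih, ascPochhammer_succ_eval, ascPochhammer_succ_eval, Nat.factorial_succ, pow_succ]
    push_cast
    field_simp

/-- The recurrence for `b(m, n1, n2)`, with coefficients in an arbitrary field. The weight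
`3 * m - 2 * n1 - n2` is required to be nonzero as an integer, before it is cast to `K`. -/
def BuhringRecurrence (kap s0 t10 t20 tau L B1 B2 D1 D2 D3 D4 D5 D6 : K) (b : ℤ → ℤ → ℤ → K) :
    Prop :=
  ∀ m n1 n2 : ℤ, 0 ≤ m → 0 ≤ n1 → 0 ≤ n2 → 3 * m - 2 * n1 - n2 ≠ 0 →
    6 * kap * s0 * ((3 * m - 2 * n1 - n2 : ℤ) : K) * b m n1 n2 =
      ((((3 * m - 2 * n1 - n2 : ℤ) : K) + tau - 3) ^ 2 - L ^ 2) * b (m - 1) n1 n2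
      + (-4 * kap * t10 * (((3 * m - 2 * n1 - n2 : ℤ) : K) + tau - 2) + t20 ^ 2 - B2) *
          b (m - 1) (n1 - 1) n2
      + (-2 * kap * t20 * (((3 * m - 2 * n1 - n2 : ℤ) : K) + tau - 5 / 2) - B1) *
          b (m - 1) n1 (n2 - 1)
      - D1 * b (m - 2) (n1 - 1) n2 - D2 * b (m - 2) n1 (n2 - 1) - D3 * b (m - 2) n1 n2
      - D4 * b (m - 3) (n1 - 1) n2 - D5 * b (m - 3) n1 (n2 - 1) - D6 * b (m - 3) n1 n2

variable {kap s0 t10 t20 tau L B1 B2 D1 D2 D3 D4 D5 D6 : K} {b : ℤ → ℤ → ℤ → K}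

theorem BuhringRecurrence.axis_recurrence
    (hb_rec : BuhringRecurrence kap s0 t10 t20 tau L B1 B2 D1 D2 D3 D4 D5 D6 b)
    (hb_neg : ∀ m n1 n2 : ℤ, (n1 < 0 ∨ n2 < 0) → b m n1 n2 = 0) {m : ℤ} (hm : 0 < m) :
    18 * kap * s0 * m * b m 0 0 =
      ((3 * m + tau - 3) ^ 2 - L ^ 2) * b (m - 1) 0 0 - D3 * b (m - 2) 0 0
        - D6 * b (m - 3) 0 0 := by
  have hn1 (j : ℤ) : b j (0 - 1) 0 = 0 := hb_neg _ _ _ (by lia)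
  have hn2 (j : ℤ) : b j 0 (0 - 1) = 0 := hb_neg _ _ _ (by lia)
  have hrec := hb_rec m 0 0 hm.le le_rfl le_rfl (by lia)
  simp only [hn1, hn2] at hrec
  push_cast at hrec
  linear_combination hrec

theorem BuhringRecurrence.axis_two_term_recurrence [CharZero K]
    (hb_rec : BuhringRecurrence kap s0 t10 t20 tau L B1 B2 D1 D2 0 D4 D5 0 b)
    (hb_neg : ∀ m n1 n2 : ℤ, (n1 < 0 ∨ n2 < 0) → b m n1 n2 = 0) (k : ℕ) :
    2 * kap * s0 * (k + 1) * b (k + 1) 0 0 =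
      ((tau - L) / 3 + k) * ((tau + L) / 3 + k) * b k 0 0 := by
  have hrec := hb_rec.axis_recurrence hb_neg (m := k + 1) (by lia)
  rw [add_sub_cancel_right] at hrec
  push_cast at hrec
  linear_combination hrec / 9

theorem buhring_b_two_term_case_general [CharZero K] (hkap : kap ≠ 0) (hs0 : s0 ≠ 0)
    (hb_neg : ∀ m n1 n2 : ℤ, (n1 < 0 ∨ n2 < 0) → b m n1 n2 = 0)
    (hb_one : b 0 0 0 = 1)
    (hb_rec : BuhringRecurrence kap s0 t10 t20 tau L B1 B2 D1 D2 D3 D4 D5 D6 b)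
    (hD3 : D3 = 0) (hD6 : D6 = 0) (m : ℕ) :
    b (m : ℤ) 0 0 =
      (2 * kap * s0) ^ (-(m : ℤ)) * (ascPochhammer K m).eval ((tau - L) / 3) *
        (ascPochhammer K m).eval ((tau + L) / 3) / (m.factorial : K) := by
  subst hD3 hD6
  have hc : 2 * kap * s0 ≠ 0 := mul_ne_zero (mul_ne_zero two_ne_zero hkap) hs0
  have haxis := eq_ascPochhammer_div_factorial_of_two_term_recurrence hc
    (a := fun k ↦ b k 0 0) (fun k ↦ mod_cast hb_rec.axis_two_term_recurrence hb_neg k) m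
  rwa [Nat.cast_zero, hb_one, mul_one] at haxis

end

theorem buhring_b_two_term_case
    (kap s0 t10 t20 tau L B1 B2 D1 D2 D3 D4 D5 D6 : ℝ)
    (hkap : kap = 1 ∨ kap = -1) (hs0 : s0 ≠ 0)
    (b : ℤ → ℤ → ℤ → ℝ)
    (hb_neg : ∀ m n1 n2 : ℤ, (m < 0 ∨ n1 < 0 ∨ n2 < 0) → b m n1 n2 = 0)
    (hb_one : b 0 0 0 = 1)
    (hb_zero : ∀ m n1 n2 : ℤ, 3 * m - 2 * n1 - n2 = 0 → (m, n1, n2) ≠ (0, 0, 0) →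
      b m n1 n2 = 0)
    (hb_rec : ∀ m n1 n2 : ℤ, 0 ≤ m → 0 ≤ n1 → 0 ≤ n2 → 3 * m - 2 * n1 - n2 ≠ 0 →
      6 * kap * s0 * ((3 * m - 2 * n1 - n2 : ℤ) : ℝ) * b m n1 n2 =
        ((((3 * m - 2 * n1 - n2 : ℤ) : ℝ) + tau - 3) ^ 2 - L ^ 2) * b (m - 1) n1 n2
        + (-4 * kap * t10 * (((3 * m - 2 * n1 - n2 : ℤ) : ℝ) + tau - 2) + t20 ^ 2 - B2) *
            b (m - 1) (n1 - 1) n2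
        + (-2 * kap * t20 * (((3 * m - 2 * n1 - n2 : ℤ) : ℝ) + tau - 5 / 2) - B1) *
            b (m - 1) n1 (n2 - 1)
        - D1 * b (m - 2) (n1 - 1) n2 - D2 * b (m - 2) n1 (n2 - 1) - D3 * b (m - 2) n1 n2
        - D4 * b (m - 3) (n1 - 1) n2 - D5 * b (m - 3) n1 (n2 - 1) - D6 * b (m - 3) n1 n2)
    (hD3 : D3 = 0) (hD6 : D6 = 0) :
    ∀ m : ℕ,
      b (m : ℤ) 0 0 =
        (2 * kap * s0) ^ (-(m : ℤ)) *
          Polynomial.eval ((tau - L) / 3) (ascPochhammer ℝ m) *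
          Polynomial.eval ((tau + L) / 3) (ascPochhammer ℝ m) /
          (Nat.factorial m : ℝ) := by
  exact buhring_b_two_term_case_general (by rcases hkap with rfl | rfl <;> norm_num) hs0
    (fun m n1 n2 h ↦ hb_neg m n1 n2 (.inr h)) hb_one hb_rec hD3 hD6
end

section
/- Let λ, τ, L be real numbers and k a natural number. Set μ⁻ = (λ − τ)/3, and assume 1 + μ⁻ + j ≠ 0 for every integer j with 0 ≤ j < k. Then Σ_{j=0}^{k} [((λ + τ − 3)/3)_{k−j} / (k−j)!] · [((3 − τ − L)/3)_j · ((3 − τ + L)/3)_j / ((1 + μ⁻)_j · j!)] = ((λ − L)/3)_k · ((λ + L)/3)_k / ((1 + μ⁻)_k · k!). -/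
open scoped BigOperators

/-!
After multiplication by `k! (c)ₖ`, Saalschütz's theorem becomes the polynomial identity
`∑ⱼ (k choose j) (c - a - b)ₖ₋ⱼ (a)ⱼ (b)ⱼ (c + j)ₖ₋ⱼ = (c - a)ₖ (c - b)ₖ`. Its summand `T k j`
satisfies `T (k + 1) j = (c - a + k) (c - b + k) T k j - U k j + U k (j - 1)` with
`U k j = (a + j) (b + j) T k j`, so summing over `j` telescopes and raising `k` by one multiplies
the sum by `(c - a + k) (c - b + k)`.
-/

section CommSemiring

variable {R : Type*} [CommSemiring R]

theorem ascPochhammer_add_eval (m n : ℕ) (x : R) :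
    (ascPochhammer R (m + n)).eval x =
      (ascPochhammer R m).eval x * (ascPochhammer R n).eval (x + m) := by
  simp [← ascPochhammer_mul]

theorem ascPochhammer_succ_eval_left (n : ℕ) (x : R) :
    (ascPochhammer R (n + 1)).eval x = x * (ascPochhammer R n).eval (x + 1) := by
  simp [ascPochhammer_succ_left]

end CommSemiring

section CommRing

variable {R : Type*} [CommRing R]

/-- The `j`-th summand of Saalschütz's theorem, multiplied by the common denominator `k! (c)ₖ` so
that it makes sense in any commutative ring. Truncation in `k - j` is harmless: the binomial
coefficient vanishes for `j > k`. -/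
noncomputable def saalschuetzTerm (a b c : R) (k j : ℕ) : R :=
  k.choose j * (ascPochhammer R (k - j)).eval (c - a - b) *
    ((ascPochhammer R j).eval a * (ascPochhammer R j).eval b) *
    (ascPochhammer R (k - j)).eval (c + j)

theorem saalschuetzTerm_eq_zero_of_lt (a b c : R) {k j : ℕ} (hkj : k < j) :
    saalschuetzTerm a b c k j = 0 := by
  simp [saalschuetzTerm, Nat.choose_eq_zero_of_lt hkj]

theorem saalschuetzTerm_succ_zero (a b c : R) (k : ℕ) :
    saalschuetzTerm a b c (k + 1) 0 =
      ((c - a + k) * (c - b + k) - a * b) * saalschuetzTerm a b c k 0 := by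
  simp only [saalschuetzTerm, ascPochhammer_succ_eval, Nat.sub_zero, Nat.choose_zero_right,
    Nat.cast_zero, add_zero]
  ring

theorem saalschuetzTerm_succ_succ (a b c : R) (k j : ℕ) :
    saalschuetzTerm a b c (k + 1) (j + 1) =
      ((c - a + k) * (c - b + k) - (a + (j + 1 : ℕ)) * (b + (j + 1 : ℕ))) *
          saalschuetzTerm a b c k (j + 1) +
        (a + j) * (b + j) * saalschuetzTerm a b c k j := by
  obtain hkj | rfl | hjk := lt_trichotomy k j
  · rw [saalschuetzTerm_eq_zero_of_lt a b c hkj,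
      saalschuetzTerm_eq_zero_of_lt a b c (Nat.lt_succ_of_lt hkj),
      saalschuetzTerm_eq_zero_of_lt a b c (Nat.succ_lt_succ hkj), mul_zero, mul_zero, add_zero]
  · rw [saalschuetzTerm_eq_zero_of_lt a b c k.lt_succ_self]
    simp only [saalschuetzTerm, ascPochhammer_succ_eval, Nat.sub_self, Nat.choose_self,
      ascPochhammer_zero, Polynomial.eval_one]
    ring
  · obtain ⟨i, rfl⟩ := Nat.exists_eq_add_of_lt hjk
    have pascal : ((j + i + 1 + 1).choose (j + 1) : R) =
        (j + i + 1).choose j + (j + i + 1).choose (j + 1) := by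
      rw [Nat.choose_succ_succ', Nat.cast_add]
    have absorption : ((j + i + 1).choose (j + 1) : R) * (j + 1) =
        (j + i + 1).choose j * (i + 1) := by
      simpa [show j + i + 1 - j = i + 1 by lia] using
        congrArg (Nat.cast : ℕ → R) (Nat.choose_succ_right_eq (j + i + 1) j)
    have factorization : (c - a + (j + i + 1 : ℕ)) * (c - b + (j + i + 1 : ℕ)) -
        (a + (j + 1 : ℕ)) * (b + (j + 1 : ℕ)) =
          (c - a - b + i) * (c + j + 1 + i + (j + 1)) := by
      push_cast
      ring
    rw [factorization]
    simp only [saalschuetzTerm, pascal, show j + i + 1 + 1 - (j + 1) = i + 1 by lia,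
      show j + i + 1 - (j + 1) = i by lia, show j + i + 1 - j = i + 1 by lia,
      ascPochhammer_succ_eval_left i (c + j), ascPochhammer_succ_eval]
    push_cast
    rw [← add_assoc c (j : R) 1]
    linear_combination -(c - a - b + i) * (a + j) * (b + j) *
      (ascPochhammer R i).eval (c - a - b) * (ascPochhammer R j).eval a *
      (ascPochhammer R j).eval b * (ascPochhammer R i).eval (c + j + 1) * absorption

theorem sum_saalschuetzTerm_succ (a b c : R) (k : ℕ) :
    ∑ j ∈ Finset.range (k + 2), saalschuetzTerm a b c (k + 1) j =
      (c - a + k) * (c - b + k) * ∑ j ∈ Finset.range (k + 1), saalschuetzTerm a b c k j := by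
  set T := saalschuetzTerm a b c k
  let U (j : ℕ) : R := (a + j) * (b + j) * T j
  have T_last : T (k + 1) = 0 := saalschuetzTerm_eq_zero_of_lt a b c k.lt_succ_self
  have recurrence (j : ℕ) : saalschuetzTerm a b c (k + 1) (j + 1) =
      (c - a + k) * (c - b + k) * T (j + 1) - (U (j + 1) - U j) := by
    rw [saalschuetzTerm_succ_succ]
    ring
  have shift : ∑ j ∈ Finset.range (k + 1), T (j + 1) + T 0 = ∑ j ∈ Finset.range (k + 1), T j := by
    rw [← Finset.sum_range_succ', Finset.sum_range_succ, T_last, add_zero]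
  rw [Finset.sum_range_succ', Finset.sum_congr rfl fun j _ => recurrence j,
    Finset.sum_sub_distrib, ← Finset.mul_sum, Finset.sum_range_sub, saalschuetzTerm_succ_zero,
    ← shift]
  simp only [U, T_last, Nat.cast_zero, add_zero, mul_zero]
  ring

theorem sum_saalschuetzTerm (a b c : R) (k : ℕ) :
    ∑ j ∈ Finset.range (k + 1), saalschuetzTerm a b c k j =
      (ascPochhammer R k).eval (c - a) * (ascPochhammer R k).eval (c - b) := by
  induction k with
  | zero => simp [saalschuetzTerm]
  | succ k ih =>
    rw [sum_saalschuetzTerm_succ, ih, ascPochhammer_succ_eval, ascPochhammer_succ_eval]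
    ring

end CommRing

section Field

variable {K : Type*} [Field K]

theorem saalschuetzTerm_div (a b c : K) {k j : ℕ} (hjk : j ≤ k)
    (hc : (ascPochhammer K k).eval c ≠ 0) (hk : (k.factorial : K) ≠ 0) :
    saalschuetzTerm a b c k j / ((ascPochhammer K k).eval c * k.factorial) =
      (ascPochhammer K (k - j)).eval (c - a - b) / (k - j).factorial *
        ((ascPochhammer K j).eval a * (ascPochhammer K j).eval b /
          ((ascPochhammer K j).eval c * j.factorial)) := by
  have hc_split : (ascPochhammer K k).eval c =
      (ascPochhammer K j).eval c * (ascPochhammer K (k - j)).eval (c + j) := by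
    rw [← ascPochhammer_add_eval, Nat.add_sub_cancel' hjk]
  have hk_split : (k.factorial : K) = k.choose j * j.factorial * (k - j).factorial := by
    rw [← Nat.choose_mul_factorial_mul_factorial hjk, Nat.cast_mul, Nat.cast_mul]
  rw [hc_split] at hc ⊢
  rw [hk_split] at hk ⊢
  simp only [mul_ne_zero_iff] at hc hk
  obtain ⟨hcj, hckj⟩ := hc
  obtain ⟨⟨hchoose, hj⟩, hkj⟩ := hk
  rw [saalschuetzTerm]
  field_simp

theorem saalschuetz_sum (a b c : K) (k : ℕ)
    (hc : (ascPochhammer K k).eval c ≠ 0) (hk : (k.factorial : K) ≠ 0) :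
    ∑ j ∈ Finset.range (k + 1),
        (ascPochhammer K (k - j)).eval (c - a - b) / (k - j).factorial *
          ((ascPochhammer K j).eval a * (ascPochhammer K j).eval b /
            ((ascPochhammer K j).eval c * j.factorial)) =
      (ascPochhammer K k).eval (c - a) * (ascPochhammer K k).eval (c - b) /
        ((ascPochhammer K k).eval c * k.factorial) := by
  rw [← sum_saalschuetzTerm, Finset.sum_div]
  exact Finset.sum_congr rfl fun j hj =>
    (saalschuetzTerm_div a b c (Finset.mem_range_succ_iff.mp hj) hc hk).symm

theorem buhring_saalschuetz_H_general (lam tau L : K) (k : ℕ)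
    (h3 : (3 : K) ≠ 0) (hk : (k.factorial : K) ≠ 0)
    (h : ∀ j : ℕ, j < k → 1 + (lam - tau) / 3 + (j : K) ≠ 0) :
    ∑ j ∈ Finset.range (k + 1),
        (ascPochhammer K (k - j)).eval ((lam + tau - 3) / 3) / (k - j).factorial *
          ((ascPochhammer K j).eval ((3 - tau - L) / 3) *
            (ascPochhammer K j).eval ((3 - tau + L) / 3) /
            ((ascPochhammer K j).eval (1 + (lam - tau) / 3) * j.factorial)) =
      (ascPochhammer K k).eval ((lam - L) / 3) * (ascPochhammer K k).eval ((lam + L) / 3) /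
        ((ascPochhammer K k).eval (1 + (lam - tau) / 3) * k.factorial) := by
  have hc : (ascPochhammer K k).eval (1 + (lam - tau) / 3) ≠ 0 := by
    rw [Ne, ascPochhammer_eval_eq_zero_iff]
    rintro ⟨j, hjk, hj⟩
    exact h j hjk (by rw [hj, add_neg_cancel])
  have hca : 1 + (lam - tau) / 3 - (3 - tau - L) / 3 = (lam + L) / 3 := by field_simp; ring
  have hcb : 1 + (lam - tau) / 3 - (3 - tau + L) / 3 = (lam - L) / 3 := by field_simp; ring
  have hcab : (lam + L) / 3 - (3 - tau + L) / 3 = (lam + tau - 3) / 3 := by field_simp; ring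
  rw [mul_comm ((ascPochhammer K k).eval ((lam - L) / 3))]
  simpa only [hca, hcb, hcab] using
    saalschuetz_sum ((3 - tau - L) / 3) ((3 - tau + L) / 3) (1 + (lam - tau) / 3) k hc hk

end Field

theorem buhring_saalschuetz_H
    (lam tau L : ℝ) (k : ℕ)
    (h : ∀ j : ℕ, j < k → (1 : ℝ) + (lam - tau) / 3 + (j : ℝ) ≠ 0) :
    ∑ j ∈ Finset.range (k + 1),
        (Polynomial.eval ((lam + tau - 3) / 3) (ascPochhammer ℝ (k - j)) /
            (Nat.factorial (k - j) : ℝ)) *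
          (Polynomial.eval ((3 - tau - L) / 3) (ascPochhammer ℝ j) *
            Polynomial.eval ((3 - tau + L) / 3) (ascPochhammer ℝ j) /
            (Polynomial.eval (1 + (lam - tau) / 3) (ascPochhammer ℝ j) *
              (Nat.factorial j : ℝ))) =
      Polynomial.eval ((lam - L) / 3) (ascPochhammer ℝ k) *
        Polynomial.eval ((lam + L) / 3) (ascPochhammer ℝ k) /
        (Polynomial.eval (1 + (lam - tau) / 3) (ascPochhammer ℝ k) *
          (Nat.factorial k : ℝ)) :=
  buhring_saalschuetz_H_general lam tau L k three_ne_zero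
    (Nat.cast_ne_zero.mpr k.factorial_ne_zero) h
end

section
/- With T11, T12, T21, T22 as defined, T11·T22 − T12·T21 = 1. -/
open scoped BigOperators

/-!
The circuit matrix is a product of six alternately upper and lower unipotent Stokes matrices,
followed by the formal monodromy `diag (e (2 * τ1), e (2 * τ2))`. Unipotent factors have
determinant `1`, and the formal monodromy has determinant `e (2 * (τ1 + τ2)) = e 6 = 1`.
The coefficients `T11`, `T12`, `T21`, `T22` are the entries of this product, expanded.
-/

section CircuitMatrix

open Matrix

variable {R : Type*} [CommRing R]

theorem transvection_zero_one (c : R) :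
    transvection (0 : Fin 2) 1 c = !![1, c; 0, 1] := by
  ext i j
  fin_cases i <;> fin_cases j <;> simp [transvection]

theorem transvection_one_zero (c : R) :
    transvection (1 : Fin 2) 0 c = !![1, 0; c, 1] := by
  ext i j
  fin_cases i <;> fin_cases j <;> simp [transvection]

/-- The circuit matrix at infinity: the Stokes matrices with off-diagonal entries `x n` and `y n`,
followed by the formal monodromy `diag (a ^ 3, b ^ 3)`, where `a` and `b` stand for `e (2 * τ1 / 3)`
and `e (2 * τ2 / 3)`. The weights `a ^ k` and `b ^ k` on the `k`-th factor arise, up to sign, from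
moving to the right end the sixth of the formal monodromy that follows each Stokes matrix. -/
def circuitMatrix (a b : R) (x y : Fin 3 → R) : Matrix (Fin 2) (Fin 2) R :=
  transvection 0 1 (x 0) * transvection 1 0 (b * y 2) *
    transvection 0 1 (a ^ 2 * x 2) * transvection 1 0 (b ^ 3 * y 1) *
    transvection 0 1 (a ^ 4 * x 1) * transvection 1 0 (b ^ 5 * y 0) *
    diagonal ![a ^ 3, b ^ 3]

theorem det_circuitMatrix (a b : R) (x y : Fin 3 → R) :
    (circuitMatrix a b x y).det = (a * b) ^ 3 := by
  simp [circuitMatrix, det_transvection_of_ne, mul_pow]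

theorem circuitMatrix_eq_of_mul_eq_one {a b : R} (hab : a * b = 1) (x y : Fin 3 → R) :
    circuitMatrix a b x y =
      !![a ^ 3 + b ^ 2 * (x 0 * y 0) + a ^ 2 * (x 1 * y 0) + x 2 * y 0 + a ^ 2 * (x 2 * y 1)
          + a ^ 2 * (x 0 * y 2) + x 0 * y 1
          + a * ((x 2 * y 2) * (x 0 * y 1) + (x 1 * y 2) * (x 0 * y 0)
            + (x 2 * y 1) * (x 1 * y 0))
          + b * ((x 2 * y 2) * (x 0 * y 0) + (x 1 * y 1) * (x 0 * y 0))
          + (x 2 * y 2) * (x 1 * y 1) * (x 0 * y 0),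
        b * x 2 + a * x 1 + b ^ 3 * x 0 + b ^ 2 * ((x 2 * y 2) * x 0 + (x 1 * y 1) * x 0)
          + (x 1 * y 2) * x 0 + (x 1 * y 1) * x 2 + b * ((x 2 * y 2) * (x 1 * y 1) * x 0);
        b ^ 2 * y 0 + a ^ 2 * y 2 + y 1 + a * ((x 2 * y 2) * y 1 + (x 1 * y 2) * y 0)
          + b * ((x 2 * y 2) * y 0 + (x 1 * y 1) * y 0) + (x 2 * y 2) * (x 1 * y 1) * y 0,
        b ^ 3 + b ^ 2 * (x 2 * y 2 + x 1 * y 1) + x 1 * y 2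
          + b * ((x 2 * y 2) * (x 1 * y 1))] := by
  simp only [circuitMatrix, transvection_zero_one, transvection_one_zero, diagonal_vec2,
    mul_fin_two]
  ext i j
  fin_cases i <;> fin_cases j <;> dsimp <;> grind

end CircuitMatrix

theorem exp_pi_mul_I_mul_exp_eq_one {w z : ℂ} (h : w + z = 2) :
    Complex.exp (Real.pi * Complex.I * w) * Complex.exp (Real.pi * Complex.I * z) = 1 := by
  rw [← Complex.exp_add, ← mul_add, h, mul_comm, ← mul_assoc, Complex.exp_two_pi_mul_I]

theorem buhring_circuit_determinant
    (σ0p σ1p σ2p σ0m σ1m σ2m τ1 τ2 C T11 T12 T21 T22 : ℂ)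
    (hτ : τ1 + τ2 = 3) (hC : C ≠ 0)
    (e : ℂ → ℂ) (he : e = fun w => Complex.exp (Real.pi * Complex.I * w))
    (hT11 : T11 = e (2 * τ1) + 4 * e (4 * τ2 / 3) * σ0m * σ0p + 4 * e (4 * τ1 / 3) * σ1p * σ0m
        + 4 * σ2p * σ0m + 4 * e (4 * τ1 / 3) * σ2p * σ1m + 4 * e (4 * τ1 / 3) * σ2m * σ0p
        + 4 * σ1m * σ0p + 16 * e (2 * τ1 / 3) * σ2m * σ2p * σ1m * σ0p
        + 16 * e (2 * τ1 / 3) * σ2m * σ1p * σ0m * σ0p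
        + 16 * e (2 * τ1 / 3) * σ2p * σ1m * σ1p * σ0m
        + 16 * e (2 * τ2 / 3) * σ2m * σ2p * σ0m * σ0p
        + 16 * e (2 * τ2 / 3) * σ1m * σ1p * σ0m * σ0p
        + 64 * σ2m * σ2p * σ1m * σ1p * σ0m * σ0p)
    (hT12 : T12 = C * (2 * Complex.I * e (2 * τ2 / 3) * σ2p + 2 * Complex.I * e (2 * τ1 / 3) * σ1p
        + 2 * Complex.I * e (2 * τ2) * σ0p + 8 * Complex.I * e (4 * τ2 / 3) * σ2m * σ2p * σ0p
        + 8 * Complex.I * σ2m * σ1p * σ0p + 8 * Complex.I * e (4 * τ2 / 3) * σ1m * σ1p * σ0p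
        + 8 * Complex.I * σ2p * σ1m * σ1p
        + 32 * Complex.I * e (2 * τ2 / 3) * σ2m * σ2p * σ1m * σ1p * σ0p))
    (hT21 : T21 = C⁻¹ * (-2 * Complex.I * e (4 * τ2 / 3) * σ0m - 2 * Complex.I * e (4 * τ1 / 3) * σ2m
        - 2 * Complex.I * σ1m - 8 * Complex.I * e (2 * τ1 / 3) * σ2m * σ2p * σ1m
        - 8 * Complex.I * e (2 * τ2 / 3) * σ2m * σ2p * σ0m
        - 8 * Complex.I * e (2 * τ2 / 3) * σ1m * σ1p * σ0m
        - 8 * Complex.I * e (2 * τ1 / 3) * σ2m * σ1p * σ0m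
        - 32 * Complex.I * σ2m * σ2p * σ1m * σ1p * σ0m))
    (hT22 : T22 = e (2 * τ2) + 4 * e (4 * τ2 / 3) * σ2m * σ2p + 4 * e (4 * τ2 / 3) * σ1m * σ1p
        + 4 * σ2m * σ1p + 16 * e (2 * τ2 / 3) * σ2m * σ2p * σ1m * σ1p) :
    T11 * T22 - T12 * T21 = 1 := by
  let x : Fin 3 → ℂ := fun n ↦ 2 * Complex.I * C * ![σ0p, σ1p, σ2p] n
  let y : Fin 3 → ℂ := fun n ↦ -2 * Complex.I * C⁻¹ * ![σ0m, σ1m, σ2m] n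
  have hpq : 2 * Complex.I * C * (-2 * Complex.I * C⁻¹) = 4 := by
    linear_combination -4 * Complex.I ^ 2 * mul_inv_cancel₀ hC - 4 * Complex.I_sq
  have hxy (m n : Fin 3) : x m * y n = 4 * (![σ0p, σ1p, σ2p] m * ![σ0m, σ1m, σ2m] n) := by
    linear_combination ![σ0p, σ1p, σ2p] m * ![σ0m, σ1m, σ2m] n * hpq
  have e_two_mul (t : ℂ) : e (2 * t) = e (2 * t / 3) ^ 3 := by
    simp only [he, ← Complex.exp_nat_mul]; push_cast; ring_nf
  have e_four_mul (t : ℂ) : e (4 * t / 3) = e (2 * t / 3) ^ 2 := by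
    simp only [he, ← Complex.exp_nat_mul]; push_cast; ring_nf
  have hab : e (2 * τ1 / 3) * e (2 * τ2 / 3) = 1 := by
    rw [he]
    exact exp_pi_mul_I_mul_exp_eq_one (by linear_combination (2 / 3) * hτ)
  have hT : !![T11, T12; T21, T22] =
      circuitMatrix (e (2 * τ1 / 3)) (e (2 * τ2 / 3)) x y := by
    rw [circuitMatrix_eq_of_mul_eq_one hab, hT11, hT12, hT21, hT22]
    simp only [hxy, e_two_mul, e_four_mul]
    ext i j
    fin_cases i <;> fin_cases j <;> dsimp [x, y] <;> ring
  rw [← Matrix.det_fin_two_of, hT, det_circuitMatrix, hab, one_pow]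
end

section
/- Assume B6 = 9s0², B5 = 12·s0·t10 and B4 = 6·s0·t20 + 4·t10². Then for all z, s, t1, t2 ∈ ℂ: 9(s² − s0²)·∂⁴K/∂s⁴ + 12(s·t1 − s0·t10)·∂⁴K/∂s³∂t1 + 6(s·t2 − s0·t20)·∂⁴K/∂s³∂t2 + 4(t1² − t10²)·∂⁴K/∂s²∂t1² + (t2² − t20²)·∂⁴K/∂s²∂t2² + 4(t1·t2 − t10·t20)·∂⁴K/∂s²∂t1∂t2 + ((6λ+9)s + 4t10·t20 − B3)·∂³K/∂s³ + ((4λ+4)t1 + t20² − B2)·∂³K/∂s²∂t1 + ((2λ+1)t2 − B1)·∂³K/∂s²∂t2 + (λ² − L²)·∂²K/∂s² − D1·∂²K/∂s∂t1 − D2·∂²K/∂s∂t2 − D3·∂K/∂s − D4·∂K/∂t1 − D5·∂K/∂t2 − D6·K = z⁸·∂²K/∂z² + (2λ+1)·z⁷·∂K/∂z − [Σ_{m=1}^{6} D_m·z^{6−m} + (L² − λ²)·z⁶ + Σ_{m=1}^{6} B_m·z^{6+m}]·K, where all partial derivatives are complex partial derivatives of K(z; s, t1, t2) = exp(z³·s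 + z²·t1 + z·t2) in the indicated variables. -/
/-!
Write `θ = z d/dz`. Conjugating by `z ^ λ` turns `θ² = z² ∂² + z ∂` into `(θ + λ)²`, so on
`K = exp φ` the differential part of `L_z`, together with `λ² z⁶`, multiplies `K` by
`z⁶ ((θφ + λ)² + θ²φ)`. On the other side `K` is a joint eigenfunction of `∂_s`, `∂_{t₁}`, `∂_{t₂}`
with eigenvalues `z³`, `z²`, `z`, so `M` multiplies `K` by a polynomial in `z`. The conditions on
`B₄`, `B₅`, `B₆` say that these are the leading coefficients of `(θφ)²` at `(s₀, t₁₀, t₂₀)`: the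
fourth-order part of `M` contributes `z⁶` times the difference of `(θφ)²` at `(s, t₁, t₂)` and at
`(s₀, t₁₀, t₂₀)`, and the two lower coefficients of the latter square are corrected in the
third-order part.
-/

open scoped BigOperators

/-- Partial derivative in the first variable of a function of three complex variables. -/
noncomputable def Ds (f : ℂ → ℂ → ℂ → ℂ) : ℂ → ℂ → ℂ → ℂ :=
  fun s t1 t2 => deriv (fun x => f x t1 t2) s

/-- Partial derivative in the second variable of a function of three complex variables. -/
noncomputable def Dt1 (f : ℂ → ℂ → ℂ → ℂ) : ℂ → ℂ → ℂ → ℂ :=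
  fun s t1 t2 => deriv (fun x => f s x t2) t1

/-- Partial derivative in the third variable of a function of three complex variables. -/
noncomputable def Dt2 (f : ℂ → ℂ → ℂ → ℂ) : ℂ → ℂ → ℂ → ℂ :=
  fun s t1 t2 => deriv (fun x => f s t1 x) t2

theorem Ds_smul (k : ℂ) (f : ℂ → ℂ → ℂ → ℂ) : Ds (k • f) = k • Ds f := by
  funext s t1 t2
  exact deriv_const_mul_field k

theorem Dt1_smul (k : ℂ) (f : ℂ → ℂ → ℂ → ℂ) : Dt1 (k • f) = k • Dt1 f := by
  funext s t1 t2
  exact deriv_const_mul_field k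

theorem Dt2_smul (k : ℂ) (f : ℂ → ℂ → ℂ → ℂ) : Dt2 (k • f) = k • Dt2 f := by
  funext s t1 t2
  exact deriv_const_mul_field k

/-- The exponential of the linear form with coefficients `a`, `b`, `c`; the kernel `K z` is the case
`a = z ^ 3`, `b = z ^ 2`, `c = z`. -/
noncomputable def planeWave (a b c : ℂ) : ℂ → ℂ → ℂ → ℂ :=
  fun s t1 t2 => Complex.exp (a * s + b * t1 + c * t2)

theorem Ds_planeWave (a b c : ℂ) : Ds (planeWave a b c) = a • planeWave a b c := by
  funext s t1 t2
  have h : HasDerivAt (fun x => a * x + b * t1 + c * t2) a s := by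
    simpa using (((hasDerivAt_id s).const_mul a).add_const (b * t1)).add_const (c * t2)
  exact h.cexp.deriv.trans (mul_comm _ _)

theorem Dt1_planeWave (a b c : ℂ) : Dt1 (planeWave a b c) = b • planeWave a b c := by
  funext s t1 t2
  have h : HasDerivAt (fun x => a * s + b * x + c * t2) b t1 := by
    simpa using (((hasDerivAt_id t1).const_mul b).const_add (a * s)).add_const (c * t2)
  exact h.cexp.deriv.trans (mul_comm _ _)

theorem Dt2_planeWave (a b c : ℂ) : Dt2 (planeWave a b c) = c • planeWave a b c := by
  funext s t1 t2
  have h : HasDerivAt (fun x => a * s + b * t1 + c * x) c t2 := by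
    simpa using ((hasDerivAt_id t2).const_mul c).const_add (a * s + b * t1)
  exact h.cexp.deriv.trans (mul_comm _ _)

/-- The operator `θ + λ` with `θ = z d/dz`, that is, the conjugate of `θ` by `z ^ λ`. -/
noncomputable def shiftedEuler (lam : ℂ) (f : ℂ → ℂ) : ℂ → ℂ :=
  fun z => z * deriv f z + lam * f z

theorem shiftedEuler_shiftedEuler (lam : ℂ) {f : ℂ → ℂ} {z : ℂ} (hf : DifferentiableAt ℂ f z)
    (hf' : DifferentiableAt ℂ (deriv f) z) :
    shiftedEuler lam (shiftedEuler lam f) z =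
      z ^ 2 * deriv (deriv f) z + (2 * lam + 1) * z * deriv f z + lam ^ 2 * f z := by
  have h : HasDerivAt (shiftedEuler lam f)
      (1 * deriv f z + z * deriv (deriv f) z + lam * deriv f z) z :=
    ((hasDerivAt_id z).mul hf'.hasDerivAt).add (hf.hasDerivAt.const_mul lam)
  rw [shiftedEuler, h.deriv, shiftedEuler]
  ring

theorem shiftedEuler_mul_cexp (lam : ℂ) {h g : ℂ → ℂ} {z : ℂ} (hh : DifferentiableAt ℂ h z)
    (hg : DifferentiableAt ℂ g z) :
    shiftedEuler lam (fun w => h w * Complex.exp (g w)) z =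
      ((z * deriv g z + lam) * h z + z * deriv h z) * Complex.exp (g z) := by
  rw [shiftedEuler, (hh.hasDerivAt.fun_mul hg.hasDerivAt.cexp).deriv]
  ring

/-- `θ ^ k φ`, where `φ = z ^ 3 * s + z ^ 2 * t1 + z * t2` is the exponent of the kernel and
`θ = z d/dz`; the powers of `θ` act diagonally on monomials in `z`. -/
noncomputable def eulerPhase (k : ℕ) (s t1 t2 : ℂ) : ℂ → ℂ :=
  fun z => 3 ^ k * z ^ 3 * s + 2 ^ k * z ^ 2 * t1 + z * t2

theorem differentiable_eulerPhase (k : ℕ) (s t1 t2 : ℂ) :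
    Differentiable ℂ (eulerPhase k s t1 t2) := by
  unfold eulerPhase
  fun_prop

theorem mul_deriv_eulerPhase (k : ℕ) (s t1 t2 z : ℂ) :
    z * deriv (eulerPhase k s t1 t2) z = eulerPhase (k + 1) s t1 t2 z := by
  have h : HasDerivAt (eulerPhase k s t1 t2)
      (3 ^ k * (3 * z ^ 2) * s + 2 ^ k * (2 * z) * t1 + t2) z := by
    unfold eulerPhase
    simpa using ((((hasDerivAt_pow 3 z).const_mul (3 ^ k)).mul_const s).fun_add
      (((hasDerivAt_pow 2 z).const_mul (2 ^ k)).mul_const t1)).fun_add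
      ((hasDerivAt_id z).mul_const t2)
  rw [h.deriv, eulerPhase]
  ring

theorem eulerPhase_one_sq (s t1 t2 z : ℂ) :
    eulerPhase 1 s t1 t2 z ^ 2 =
      9 * s ^ 2 * z ^ 6 + 12 * s * t1 * z ^ 5 + (6 * s * t2 + 4 * t1 ^ 2) * z ^ 4 +
        4 * t1 * t2 * z ^ 3 + t2 ^ 2 * z ^ 2 := by
  rw [eulerPhase]
  ring

theorem planeWave_eq_cexp_eulerPhase (z s t1 t2 : ℂ) :
    planeWave (z ^ 3) (z ^ 2) z s t1 t2 = Complex.exp (eulerPhase 0 s t1 t2 z) := by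
  simp [planeWave, eulerPhase]

theorem shiftedEuler_cexp_eulerPhase (lam s t1 t2 : ℂ) :
    shiftedEuler lam (fun w => Complex.exp (eulerPhase 0 s t1 t2 w)) =
      fun w => (eulerPhase 1 s t1 t2 w + lam) * Complex.exp (eulerPhase 0 s t1 t2 w) := by
  funext w
  simpa [mul_deriv_eulerPhase] using shiftedEuler_mul_cexp lam (h := fun _ => 1)
    (differentiableAt_const 1) (differentiable_eulerPhase 0 s t1 t2 w)

theorem shiftedEuler_shiftedEuler_cexp_eulerPhase (lam s t1 t2 z : ℂ) :
    shiftedEuler lam (shiftedEuler lam fun w => Complex.exp (eulerPhase 0 s t1 t2 w)) z =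
      ((eulerPhase 1 s t1 t2 z + lam) ^ 2 + eulerPhase 2 s t1 t2 z) *
        Complex.exp (eulerPhase 0 s t1 t2 z) := by
  rw [shiftedEuler_cexp_eulerPhase, shiftedEuler_mul_cexp lam
    ((differentiable_eulerPhase 1 s t1 t2 z).add_const lam) (differentiable_eulerPhase 0 s t1 t2 z),
    deriv_add_const, mul_deriv_eulerPhase, mul_deriv_eulerPhase, ← sq]

theorem euler_operator_planeWave (lam s t1 t2 z : ℂ) :
    z ^ 2 * deriv (deriv fun w => planeWave (w ^ 3) (w ^ 2) w s t1 t2) z +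
        (2 * lam + 1) * z * deriv (fun w => planeWave (w ^ 3) (w ^ 2) w s t1 t2) z +
        lam ^ 2 * planeWave (z ^ 3) (z ^ 2) z s t1 t2 =
      ((eulerPhase 1 s t1 t2 z + lam) ^ 2 + eulerPhase 2 s t1 t2 z) *
        planeWave (z ^ 3) (z ^ 2) z s t1 t2 := by
  have hdiff : Differentiable ℂ fun w => Complex.exp (eulerPhase 0 s t1 t2 w) :=
    (differentiable_eulerPhase 0 s t1 t2).cexp
  simp only [planeWave_eq_cexp_eulerPhase]
  rw [← shiftedEuler_shiftedEuler lam (hdiff z) (hdiff.deriv z),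
    shiftedEuler_shiftedEuler_cexp_eulerPhase]

theorem buhring_kernel_pde_identity
    (lam L s0 t10 t20 B1 B2 B3 B4 B5 B6 D1 D2 D3 D4 D5 D6 : ℂ)
    (K : ℂ → ℂ → ℂ → ℂ → ℂ)
    (hK : K = fun z s t1 t2 => Complex.exp (z ^ 3 * s + z ^ 2 * t1 + z * t2))
    (hB6 : B6 = 9 * s0 ^ 2) (hB5 : B5 = 12 * s0 * t10)
    (hB4 : B4 = 6 * s0 * t20 + 4 * t10 ^ 2) :
    ∀ z s t1 t2 : ℂ,
      9 * (s ^ 2 - s0 ^ 2) * Ds (Ds (Ds (Ds (K z)))) s t1 t2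
        + 12 * (s * t1 - s0 * t10) * Ds (Ds (Ds (Dt1 (K z)))) s t1 t2
        + 6 * (s * t2 - s0 * t20) * Ds (Ds (Ds (Dt2 (K z)))) s t1 t2
        + 4 * (t1 ^ 2 - t10 ^ 2) * Ds (Ds (Dt1 (Dt1 (K z)))) s t1 t2
        + (t2 ^ 2 - t20 ^ 2) * Ds (Ds (Dt2 (Dt2 (K z)))) s t1 t2
        + 4 * (t1 * t2 - t10 * t20) * Ds (Ds (Dt1 (Dt2 (K z)))) s t1 t2
        + ((6 * lam + 9) * s + 4 * t10 * t20 - B3) * Ds (Ds (Ds (K z))) s t1 t2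
        + ((4 * lam + 4) * t1 + t20 ^ 2 - B2) * Ds (Ds (Dt1 (K z))) s t1 t2
        + ((2 * lam + 1) * t2 - B1) * Ds (Ds (Dt2 (K z))) s t1 t2
        + (lam ^ 2 - L ^ 2) * Ds (Ds (K z)) s t1 t2
        - D1 * Ds (Dt1 (K z)) s t1 t2
        - D2 * Ds (Dt2 (K z)) s t1 t2
        - D3 * Ds (K z) s t1 t2
        - D4 * Dt1 (K z) s t1 t2
        - D5 * Dt2 (K z) s t1 t2
        - D6 * K z s t1 t2 =
      z ^ 8 * deriv (fun w => deriv (fun w' => K w' s t1 t2) w) z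
        + (2 * lam + 1) * z ^ 7 * deriv (fun w => K w s t1 t2) z
        - ((D1 * z ^ 5 + D2 * z ^ 4 + D3 * z ^ 3 + D4 * z ^ 2 + D5 * z + D6) +
            (L ^ 2 - lam ^ 2) * z ^ 6 +
            (B1 * z ^ 7 + B2 * z ^ 8 + B3 * z ^ 9 + B4 * z ^ 10 + B5 * z ^ 11 + B6 * z ^ 12)) *
            K z s t1 t2 := by
  intro z s t1 t2
  have hK_planeWave : K = fun w => planeWave (w ^ 3) (w ^ 2) w := hK
  have hB : B4 * z ^ 4 + B5 * z ^ 5 + B6 * z ^ 6 =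
      eulerPhase 1 s0 t10 t20 z ^ 2 - 4 * t10 * t20 * z ^ 3 - t20 ^ 2 * z ^ 2 := by
    rw [eulerPhase_one_sq, hB4, hB5, hB6]
    ring
  have hEuler := euler_operator_planeWave lam s t1 t2 z
  rw [hK_planeWave]
  calc
    _ = (z ^ 6 * ((eulerPhase 1 s t1 t2 z + lam) ^ 2 + eulerPhase 2 s t1 t2 z
            - eulerPhase 1 s0 t10 t20 z ^ 2 + 4 * t10 * t20 * z ^ 3 + t20 ^ 2 * z ^ 2
            - L ^ 2 - B1 * z - B2 * z ^ 2 - B3 * z ^ 3)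
          - (D1 * z ^ 5 + D2 * z ^ 4 + D3 * z ^ 3 + D4 * z ^ 2 + D5 * z + D6)) *
        planeWave (z ^ 3) (z ^ 2) z s t1 t2 := by
      simp only [Ds_smul, Dt1_smul, Dt2_smul, Ds_planeWave, Dt1_planeWave, Dt2_planeWave,
        Pi.smul_apply, smul_eq_mul, eulerPhase]
      ring
    _ = _ := by
      linear_combination z ^ 6 * planeWave (z ^ 3) (z ^ 2) z s t1 t2 * hB - z ^ 6 * hEuler
end
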